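/- arXiv:1604.08797 — 2 statements merged into one kernel-verified Lean document; each statement's English description precedes it below -/
import Mathlib

section
/- A simple 1-planar graph on n ≥ 3 vertices has at most 4n − 8 edges. -/
/-- A simple drawing of a graph in the plane: vertices are mapped to distinct points,
each edge to a Jordan arc between the points of its endpoints whose interior avoids
all vertex points, and two distinct arcs share at most one point. -/
structure SimpleDrawing {V : Type*} (G : SimpleGraph V) where
  pos : V → ℝ × ℝ
  pos_inj : Function.Injective pos
  curve : G.edgeSet → ℝ → ℝ × ℝ
  curve_cont : ∀ e, ContinuousOn (curve e) (Set.Icc 0 1)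
  curve_inj : ∀ e, Set.InjOn (curve e) (Set.Icc 0 1)
  curve_ends : ∀ (e : G.edgeSet) (u v : V), (e : Sym2 V) = s(u, v) →
    (curve e 0 = pos u ∧ curve e 1 = pos v) ∨ (curve e 0 = pos v ∧ curve e 1 = pos u)
  curve_avoid : ∀ (e : G.edgeSet) (t : ℝ), t ∈ Set.Ioo (0:ℝ) 1 →
    curve e t ∉ Set.range pos
  simple : ∀ e f : G.edgeSet, e ≠ f →
    Set.Subsingleton (curve e '' Set.Icc 0 1 ∩ curve f '' Set.Icc 0 1)

/-- The interior of the arc of an edge. -/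
def SimpleDrawing.interiorArc {V : Type*} {G : SimpleGraph V} (D : SimpleDrawing G)
    (e : G.edgeSet) : Set (ℝ × ℝ) :=
  D.curve e '' Set.Ioo 0 1

/-- Two edges cross if they are distinct and their arcs share an interior point. -/
def SimpleDrawing.Crosses {V : Type*} {G : SimpleGraph V} (D : SimpleDrawing G)
    (e f : G.edgeSet) : Prop :=
  e ≠ f ∧ (D.interiorArc e ∩ D.interiorArc f).Nonempty

/-- A drawing is 1-plane if each edge is crossed at most once,
i.e. crosses at most one other edge. -/
def SimpleDrawing.IsOnePlane {V : Type*} {G : SimpleGraph V} (D : SimpleDrawing G) : Prop :=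
  ∀ e : G.edgeSet, {f : G.edgeSet | D.Crosses e f}.Subsingleton

/-- A drawing is plane (crossing-free) if no two edges cross. -/
def SimpleDrawing.IsPlane {V : Type*} {G : SimpleGraph V} (D : SimpleDrawing G) : Prop :=
  ∀ e f : G.edgeSet, ¬ D.Crosses e f

/-!
Deleting one edge of every crossing leaves a plane graph, which has at most `3n - 6` edges. Joining
each of the `c` crossings to the four endpoints of its two edges, along these edges, gives a plane
bipartite graph with `n + c` vertices and `4c` edges, so `4c ≤ 2(n + c) - 4`, that is, `c ≤ n - 2`.

Both bounds for plane graphs are proved without faces. Let `F` be a field of characteristic 2,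
place the vertices at points `x v ∈ F`, and let `w` be a stress: edge weights such that at every
vertex `∑ w e * (x u + x v) ^ r = 0`, over the edges `e = uv` there, for all `r < d`. The mod 2
van Kampen obstruction of a plane graph is the coboundary of winding numbers; pairing this fact
with `w e * w f * P e f`, for a suitable kernel `P`, only the pairs of edges with a common vertex
survive, and give `∑ (w e * (x u + x v)) ^ 2 * x u * x v = 0` for `d = 3`, and for `d = 2` and
bipartite graphs `∑ w e ^ 2 * x u * x v = 0`. If the points are algebraically independent over the
prime field, the derivation `∂²/∂(x u)∂(x v)` extracts the coefficient of a single edge, so that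
`w = 0`. Therefore the transposed linear map, from vectors in `F ^ (d * n)` to edge weights, is
onto, and its kernel has dimension at least `6` for `d = 3` and at least `4` for `d = 2`.
-/

namespace PlaneGraph

open Finset

section Ends

variable {V : Type*} {G : SimpleGraph V}

lemma exists_eq_mk (e : G.edgeSet) : ∃ u v, u ≠ v ∧ (e : Sym2 V) = s(u, v) := by
  obtain ⟨⟨u, v⟩, he⟩ := e
  exact ⟨u, v, G.ne_of_adj he, rfl⟩

variable [DecidableEq V]

/-- The set of the two endpoints of an edge. -/
def ends (e : G.edgeSet) : Finset V := (e : Sym2 V).toFinset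

@[simp]
lemma mem_ends {e : G.edgeSet} {v : V} : v ∈ ends e ↔ v ∈ (e : Sym2 V) := Sym2.mem_toFinset

lemma ends_eq_pair {e : G.edgeSet} {u v : V} (h : (e : Sym2 V) = s(u, v)) : ends e = {u, v} := by
  rw [ends, h, Sym2.toFinset_mk_eq]

lemma card_ends (e : G.edgeSet) : #(ends e) = 2 :=
  Sym2.card_toFinset_of_not_isDiag _ (G.not_isDiag_of_mem_edgeSet e.2)

lemma ends_inter_ends {e f : G.edgeSet} (hne : e ≠ f) {v : V} (he : v ∈ ends e)
    (hf : v ∈ ends f) : ends e ∩ ends f = {v} := by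
  refine eq_singleton_iff_unique_mem.2 ⟨mem_inter.2 ⟨he, hf⟩, fun u hu => ?_⟩
  rw [mem_inter] at hu
  simp only [mem_ends] at he hf hu
  by_contra huv
  exact hne (Subtype.ext (Sym2.eq_of_ne_mem huv hu.1 he hu.2 hf))

lemma sum_ends_comm [Fintype V] [Fintype G.edgeSet] {M : Type*} [AddCommMonoid M]
    (f : G.edgeSet → V → M) :
    ∑ e, ∑ v ∈ ends e, f e v = ∑ v, ∑ e with v ∈ ends e, f e v :=
  sum_comm' (by simp)

end Ends

section Logarithm

open Complex
open scoped Real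

lemma exists_continuous_log {A : Type*} [TopologicalSpace A] [SimplyConnectedSpace A]
    [LocallyPathConnectedSpace A] (f : C(A, ℂ)) (hf : ∀ a, f a ≠ 0) :
    ∃ g : C(A, ℂ), ∀ a, exp (g a) = f a := by
  obtain ⟨a₀⟩ : Nonempty A := inferInstance
  obtain ⟨g, ⟨-, hg⟩, -⟩ := isCoveringMapOn_exp.existsUnique_continuousMap_lifts f
    (e₀ := log (f a₀)) (exp_log (hf a₀)) (fun a => by simpa using hf a)
  exact ⟨g, congrFun hg⟩

open Classical in
/-- The change, from time `0` to time `1`, of a continuous logarithm of the curve `γ`.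
Junk value `0` if `γ` has no continuous logarithm, i.e. if it passes through the origin. -/
noncomputable def logIncrement (γ : C(ℝ, ℂ)) : ℂ :=
  if h : ∃ g : C(ℝ, ℂ), ∀ t, exp (g t) = γ t then h.choose 1 - h.choose 0 else 0

lemma logIncrement_eq {γ g : C(ℝ, ℂ)} {c : ℂ} (h : ∀ t, exp (g t) = c * γ t) :
    logIncrement γ = g 1 - g 0 := by
  have hc : c ≠ 0 := fun hc => exp_ne_zero (g 0) (by rw [h, hc, zero_mul])
  have hlog : ∃ g : C(ℝ, ℂ), ∀ t, exp (g t) = γ t :=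
    ⟨g - .const ℝ (log c), fun t => by simp [exp_sub, h, exp_log hc, hc]⟩
  have hconst : (hlog.choose - g) 1 = (hlog.choose - g) 0 :=
    isCoveringMap_exp.const_of_comp (hlog.choose - g).continuous (fun s t => by
      have hne (t : ℝ) : γ t ≠ 0 := fun h0 => exp_ne_zero (g t) (by rw [h, h0, mul_zero])
      simp [exp_sub, hlog.choose_spec, h, div_mul_cancel_right₀, hne]) 1 0
  rw [logIncrement, dif_pos hlog]
  simp only [ContinuousMap.sub_apply] at hconst
  linear_combination hconst

lemma exists_int_logIncrement_eq {γ : C(ℝ, ℂ)} (h : ∀ t, γ t ≠ 0) :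
    ∃ m : ℤ, logIncrement γ = log (γ 1) - log (γ 0) + m * (2 * π * I) := by
  obtain ⟨g, hg⟩ := exists_continuous_log γ h
  have hlift (t : ℝ) : ∃ n : ℤ, g t = log (γ t) + n * (2 * π * I) :=
    exp_eq_exp_iff_exists_int.1 (by rw [hg, exp_log (h t)])
  obtain ⟨n₀, h₀⟩ := hlift 0
  obtain ⟨n₁, h₁⟩ := hlift 1
  refine ⟨n₁ - n₀, ?_⟩
  rw [logIncrement_eq (c := 1) (by simpa using hg), h₀, h₁]
  push_cast
  ring

/-- A logarithm of `γ s - δ t` on the square `[0, 1] × [0, 1]` has the same total increment along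
the two ways of joining opposite corners. -/
lemma logIncrement_sub_add_logIncrement_sub {γ δ : C(ℝ, ℂ)} (h : ∀ s t, γ s ≠ δ t) :
    logIncrement (γ - .const ℝ (δ 0)) + logIncrement (δ - .const ℝ (γ 1)) =
      logIncrement (δ - .const ℝ (γ 0)) + logIncrement (γ - .const ℝ (δ 1)) := by
  obtain ⟨L, hL⟩ := exists_continuous_log
    (γ.comp .fst - δ.comp .snd : C(ℝ × ℝ, ℂ)) (fun x => sub_ne_zero.2 (h x.1 x.2))
  have hγ (t : ℝ) : logIncrement (γ - .const ℝ (δ t)) = L (1, t) - L (0, t) :=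
    logIncrement_eq (g := L.comp ⟨fun s => (s, t), by fun_prop⟩) (c := 1) fun s => by simp [hL]
  have hδ (s : ℝ) : logIncrement (δ - .const ℝ (γ s)) = L (s, 1) - L (s, 0) :=
    logIncrement_eq (g := L.comp ⟨fun t => (s, t), by fun_prop⟩) (c := -1) fun t => by simp [hL]
  rw [hγ, hγ, hδ, hδ]
  ring

lemma exists_int_log_neg_eq {z : ℂ} (hz : z ≠ 0) :
    ∃ k : ℤ, log (-z) = log z + (2 * k + 1) * (π * I) := by
  have hexp : exp (log (-z)) = exp (log z + π * I) := by
    rw [exp_log (neg_ne_zero.2 hz), exp_add, exp_log hz, exp_pi_mul_I, mul_neg_one]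
  obtain ⟨k, hk⟩ := exp_eq_exp_iff_exists_int.1 hexp
  exact ⟨k, by rw [hk]; ring⟩

lemma int_eq_of_mul_two_pi_I_eq {m n : ℤ} (h : (m : ℂ) * (2 * π * I) = n * (2 * π * I)) :
    m = n :=
  Int.cast_injective (mul_right_cancel₀ two_pi_I_ne_zero h)

end Logarithm

section VanKampen

variable {V : Type*} {G : SimpleGraph V}

/-- A crossing-free drawing of `G` in `X` in a weak sense: the region `arc e` drawn for an edge `e`
is only required to be a set joining the two endpoints of `e`, and only regions of edges without
a common endpoint have to be disjoint. -/
structure WeakPlaneDrawing (G : SimpleGraph V) (X : Type*) [TopologicalSpace X] where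
  pos : V → X
  pos_injective : Function.Injective pos
  arc : G.edgeSet → Set X
  joinedIn : ∀ (e : G.edgeSet) (u v : V), (e : Sym2 V) = s(u, v) →
    JoinedIn (arc e) (pos u) (pos v)
  pos_notMem_arc : ∀ (e : G.edgeSet), ∀ v ∉ (e : Sym2 V), pos v ∉ arc e
  disjoint_arc : ∀ e f : G.edgeSet, (∀ v ∈ (e : Sym2 V), v ∉ (f : Sym2 V)) →
    Disjoint (arc e) (arc f)

/-- A certificate that the mod 2 van Kampen obstruction of `G` vanishes, over a ring `R` of
characteristic 2. For a drawing in `ℂ`, `side i k` tells the branches of `log (pos i - pos k)` and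
`log (pos k - pos i)` apart, and `wind e k` is the winding number of `e` around `pos k`. -/
structure VanKampenWitness [DecidableEq V] (G : SimpleGraph V) (R : Type*) [CommRing R] where
  side : V → V → R
  wind : G.edgeSet → V → R
  side_add_side : ∀ i k, i ≠ k → side i k + side k i = 1
  sum_wind_add_sum_wind : ∀ e f : G.edgeSet, Disjoint (ends e) (ends f) →
    ∑ k ∈ ends f, wind e k + ∑ i ∈ ends e, wind f i = ∑ i ∈ ends e, ∑ k ∈ ends f, side i k

namespace WeakPlaneDrawing

/-- The image of a weak plane drawing under a continuous injection. -/
def map {X Y : Type*} [TopologicalSpace X] [TopologicalSpace Y] (D : WeakPlaneDrawing G X)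
    (φ : C(X, Y)) (hφ : Function.Injective φ) : WeakPlaneDrawing G Y where
  pos := φ ∘ D.pos
  pos_injective := hφ.comp D.pos_injective
  arc e := φ '' D.arc e
  joinedIn e u v h := (D.joinedIn e u v h).map_continuousOn φ.continuous.continuousOn
  pos_notMem_arc e v hv h := D.pos_notMem_arc e v hv ((hφ.mem_set_image).1 h)
  disjoint_arc e f h := (Set.disjoint_image_iff hφ).2 (D.disjoint_arc e f h)

lemma exists_curve {X : Type*} [TopologicalSpace X] (D : WeakPlaneDrawing G X) (e : G.edgeSet) :
    ∃ (i j : V) (γ : C(ℝ, X)), i ≠ j ∧ (e : Sym2 V) = s(i, j) ∧ γ 0 = D.pos i ∧ γ 1 = D.pos j ∧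
      ∀ t, γ t ∈ D.arc e := by
  obtain ⟨i, j, hij, he⟩ := exists_eq_mk e
  obtain ⟨γ, hγ⟩ := D.joinedIn e i j he
  exact ⟨i, j, ⟨γ.extend, γ.continuous_extend⟩, hij, he, γ.extend_zero, γ.extend_one, fun _ => hγ _⟩

open Complex in
open scoped Real in
lemma exists_int_wind (D : WeakPlaneDrawing G ℂ) {e : G.edgeSet} {γ : C(ℝ, ℂ)}
    (hγ : ∀ t, γ t ∈ D.arc e) (v : V) : ∃ m : ℤ, v ∉ (e : Sym2 V) →
      logIncrement (γ - .const ℝ (D.pos v)) =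
        log (γ 1 - D.pos v) - log (γ 0 - D.pos v) + m * (2 * π * I) := by
  by_cases hv : v ∈ (e : Sym2 V)
  · exact ⟨0, fun h => absurd hv h⟩
  · obtain ⟨m, hm⟩ := exists_int_logIncrement_eq (γ := γ - .const ℝ (D.pos v)) fun t =>
      sub_ne_zero.2 (ne_of_mem_of_not_mem (hγ t) (D.pos_notMem_arc e v hv))
    exact ⟨m, fun _ => hm⟩

open Complex in
open scoped Real in
lemma exists_int_side (D : WeakPlaneDrawing G ℂ) (i k : V) : ∃ n : ℤ, i ≠ k →
    log (D.pos k - D.pos i) = log (D.pos i - D.pos k) + (2 * n + 1) * (π * I) := by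
  rcases eq_or_ne i k with h | h
  · exact ⟨0, fun h' => absurd h h'⟩
  · obtain ⟨n, hn⟩ := exists_int_log_neg_eq (sub_ne_zero.2 (D.pos_injective.ne h))
    exact ⟨n, fun _ => by rw [← hn, neg_sub]⟩

/-- Cancelling the logarithms in `logIncrement_sub_add_logIncrement_sub` leaves an identity between
integers, whose reduction mod 2 is the one required. -/
theorem nonempty_vanKampenWitness [DecidableEq V] (D : WeakPlaneDrawing G ℂ) (R : Type*)
    [CommRing R] [CharP R 2] : Nonempty (VanKampenWitness G R) := by
  choose src tgt γ hne hends hsrc htgt harc using D.exists_curve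
  choose side hside using D.exists_int_side
  choose wind hwind using fun e => D.exists_int_wind (harc e)
  refine ⟨⟨fun i k => side i k, fun e v => wind e v, fun i k hik => ?_, fun e f hef => ?_⟩⟩
  · have hint : side i k + side k i = -1 :=
      int_eq_of_mul_two_pi_I_eq (by
        push_cast
        linear_combination -hside i k hik - hside k i hik.symm)
    rw [← Int.cast_add, hint, Int.cast_neg, Int.cast_one, CharTwo.neg_eq]
  · rw [ends_eq_pair (hends e), ends_eq_pair (hends f)] at hef ⊢
    obtain ⟨⟨hki, hkj⟩, hli, hlj⟩ :
        (src f ≠ src e ∧ src f ≠ tgt e) ∧ tgt f ≠ src e ∧ tgt f ≠ tgt e := by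
      simpa using hef
    have notMem {g : G.edgeSet} {v : V} (hs : v ≠ src g) (ht : v ≠ tgt g) : v ∉ (g : Sym2 V) := by
      simp [hends g, hs, ht]
    have hsquare := logIncrement_sub_add_logIncrement_sub (γ := γ e) (δ := γ f) fun s t =>
      (D.disjoint_arc e f fun v hv => by
        rw [hends e, Sym2.mem_iff] at hv
        rcases hv with rfl | rfl
        exacts [notMem hki.symm hli.symm, notMem hkj.symm hlj.symm]).ne_of_mem (harc e s) (harc f t)
    simp only [hsrc, htgt] at hsquare hwind
    rw [hwind e _ (notMem hki hkj), hwind e _ (notMem hli hlj),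
      hwind f _ (notMem hki.symm hli.symm), hwind f _ (notMem hkj.symm hlj.symm)] at hsquare
    have hint : wind e (src f) - wind e (tgt f) + (wind f (tgt e) - wind f (src e)) =
        side (src e) (tgt f) - side (src e) (src f) +
          (side (tgt e) (src f) - side (tgt e) (tgt f)) :=
      int_eq_of_mul_two_pi_I_eq (by
        push_cast
        linear_combination hsquare - hside _ _ hki.symm + hside _ _ hli.symm +
          hside _ _ hkj.symm - hside _ _ hlj.symm)
    have hcast := congrArg (Int.cast : ℤ → R) hint
    push_cast [CharTwo.sub_eq_add] at hcast
    rw [sum_pair (hne e), sum_pair (hne e), sum_pair (hne f), sum_pair (hne f), sum_pair (hne f)]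
    linear_combination hcast

end WeakPlaneDrawing

end VanKampen

section Balanced

variable {V : Type*} {G : SimpleGraph V} [DecidableEq V] [Fintype G.edgeSet]
  {R : Type*} [CommRing R]

/-- Edge weights with zero sum at every vertex. -/
def IsBalanced (a : G.edgeSet → R) : Prop := ∀ v, ∑ e with v ∈ ends e, a e = 0

lemma IsBalanced.sum_mul_sum_ends [Finite V] {a : G.edgeSet → R} (ha : IsBalanced a)
    (c : V → R) : ∑ e, a e * ∑ v ∈ ends e, c v = 0 := by
  have := Fintype.ofFinite V
  simp only [mul_sum, sum_ends_comm (fun e v => a e * c v), ← sum_mul, ha _, zero_mul,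
    sum_const_zero]

lemma sum_sum_eq_sum_vertex [Fintype V] {K : G.edgeSet → G.edgeSet → R} (hdiag : ∀ e, K e e = 0)
    (hdisj : ∀ e f, Disjoint (ends e) (ends f) → K e f = 0) :
    ∑ e, ∑ f, K e f = ∑ v, ∑ e with v ∈ ends e, ∑ f with v ∈ ends f, K e f := by
  have hcard (e f : G.edgeSet) : K e f = ∑ _v ∈ ends e ∩ ends f, K e f := by
    by_cases h : Disjoint (ends e) (ends f)
    · rw [hdisj e f h, sum_const_zero]
    obtain ⟨v, hve, hvf⟩ := not_disjoint_iff.1 h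
    rcases eq_or_ne e f with rfl | hne
    · rw [hdiag, sum_const_zero]
    · rw [ends_inter_ends hne hve hvf, sum_singleton]
  rw [← sum_ends_comm]
  refine sum_congr rfl fun e _ => ?_
  rw [sum_congr rfl fun f _ => hcard e f]
  exact sum_comm' (by simp [and_comm])

end Balanced

namespace VanKampenWitness

variable {V : Type*} {G : SimpleGraph V} [DecidableEq V] {R : Type*} [CommRing R]

/-- The failure of `sum_wind_add_sum_wind` at a pair of edges. -/
def defect (N : VanKampenWitness G R) (e f : G.edgeSet) : R :=
  ∑ k ∈ ends f, N.wind e k + ∑ i ∈ ends e, N.wind f i + ∑ i ∈ ends e, ∑ k ∈ ends f, N.side i k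

lemma sum_sum_mul_defect [Finite V] [Fintype G.edgeSet] {w : G.edgeSet → R}
    {P : G.edgeSet → G.edgeSet → R} (N : VanKampenWitness G R)
    (hleft : ∀ f, IsBalanced fun e => w e * P e f)
    (hright : ∀ e, IsBalanced fun f => w f * P e f) :
    ∑ e, ∑ f, w e * w f * P e f * N.defect e f = 0 := by
  have hfirst (e : G.edgeSet) :
      ∑ f, w f * P e f * ∑ k ∈ ends f, (N.wind e k + ∑ i ∈ ends e, N.side i k) = 0 :=
    (hright e).sum_mul_sum_ends _
  have hsecond (f : G.edgeSet) : ∑ e, w e * P e f * ∑ i ∈ ends e, N.wind f i = 0 :=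
    (hleft f).sum_mul_sum_ends _
  calc ∑ e, ∑ f, w e * w f * P e f * N.defect e f
      = ∑ e, w e * ∑ f, w f * P e f * ∑ k ∈ ends f, (N.wind e k + ∑ i ∈ ends e, N.side i k) +
          ∑ f, w f * ∑ e, w e * P e f * ∑ i ∈ ends e, N.wind f i := by
        simp only [mul_sum (s := univ)]
        rw [sum_comm (f := fun f e => w f * (w e * P e f * ∑ i ∈ ends e, N.wind f i)),
          ← sum_add_distrib]
        simp only [← sum_add_distrib]
        refine sum_congr rfl fun e _ => sum_congr rfl fun f _ => ?_
        rw [defect, sum_add_distrib, sum_comm (s := ends e)]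
        ring
    _ = 0 := by simp only [hfirst, hsecond, mul_zero, sum_const_zero, add_zero]

variable [CharP R 2]

lemma defect_of_disjoint (N : VanKampenWitness G R) {e f : G.edgeSet}
    (h : Disjoint (ends e) (ends f)) : N.defect e f = 0 := by
  rw [defect, N.sum_wind_add_sum_wind e f h, CharTwo.add_self_eq_zero]

lemma side_add_side_swap (N : VanKampenWitness G R) (i k : V) :
    N.side i k + N.side k i = 1 + if i = k then 1 else 0 := by
  split_ifs with h
  · rw [h, CharTwo.add_self_eq_zero, CharTwo.add_self_eq_zero]
  · rw [N.side_add_side i k h, add_zero]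

lemma defect_add_defect_swap (N : VanKampenWitness G R) {e f : G.edgeSet} (hne : e ≠ f) {v : V}
    (he : v ∈ ends e) (hf : v ∈ ends f) : N.defect e f + N.defect f e = 1 := by
  have hside : ∑ i ∈ ends e, ∑ k ∈ ends f, N.side i k + ∑ k ∈ ends f, ∑ i ∈ ends e, N.side k i =
      #(ends e) * #(ends f) + #(ends e ∩ ends f) := by
    rw [sum_comm (s := ends f)]
    simp only [← sum_add_distrib, side_add_side_swap]
    simp [sum_add_distrib, -mem_ends]
  rw [ends_inter_ends hne he hf, card_ends, card_ends, card_singleton] at hside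
  push_cast [CharTwo.two_eq_zero] at hside
  have hwind : ∀ a b : R, a + b + (b + a) = 0 := fun a b => by
    rw [add_comm b a, CharTwo.add_self_eq_zero]
  simp only [defect]
  linear_combination hside + hwind (∑ k ∈ ends f, N.wind e k) (∑ i ∈ ends e, N.wind f i)

variable [Fintype G.edgeSet] {w : G.edgeSet → R}

lemma sum_sum_mul_defect_vertex (N : VanKampenWitness G R) (hw : IsBalanced w) (v : V)
    (φ : G.edgeSet → R) :
    ∑ e with v ∈ ends e, ∑ f with v ∈ ends f, w e * w f * (φ e + φ f) * N.defect e f =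
      ∑ e with v ∈ ends e, w e ^ 2 * φ e := by
  have hswap (e f : G.edgeSet) (he : v ∈ ends e) (hf : v ∈ ends f) :
      N.defect e f + N.defect f e = 1 + if f = e then 1 else 0 := by
    split_ifs with h
    · rw [h, CharTwo.add_self_eq_zero, CharTwo.add_self_eq_zero]
    · rw [N.defect_add_defect_swap (Ne.symm h) he hf, add_zero]
  calc ∑ e with v ∈ ends e, ∑ f with v ∈ ends f, w e * w f * (φ e + φ f) * N.defect e f
      = ∑ e with v ∈ ends e, ∑ f with v ∈ ends f,
          w e * φ e * (w f * (N.defect e f + N.defect f e)) := by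
        simp only [mul_add, add_mul, sum_add_distrib]
        congr 1
        · refine sum_congr rfl fun e _ => sum_congr rfl fun f _ => by ring
        · rw [sum_comm]
          refine sum_congr rfl fun e _ => sum_congr rfl fun f _ => by ring
    _ = ∑ e with v ∈ ends e, w e * φ e * (∑ f with v ∈ ends f, w f + w e) := by
        refine sum_congr rfl fun e he => ?_
        rw [← mul_sum, sum_congr rfl fun f hf => by
          rw [hswap e f (mem_filter.1 he).2 (mem_filter.1 hf).2, mul_add, mul_one, mul_ite, mul_one,
            mul_zero], sum_add_distrib, sum_ite_eq', if_pos he]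
    _ = ∑ e with v ∈ ends e, w e ^ 2 * φ e := by
        simp only [hw v, zero_add]
        exact sum_congr rfl fun e _ => by ring

theorem sum_sq_mul_eq_zero [Finite V] {P : G.edgeSet → G.edgeSet → R} {ψ : V → G.edgeSet → R}
    (N : VanKampenWitness G R) (hw : IsBalanced w)
    (hleft : ∀ f, IsBalanced fun e => w e * P e f)
    (hright : ∀ e, IsBalanced fun f => w f * P e f)
    (hP : ∀ e f, ∀ v ∈ ends e, v ∈ ends f → P e f = ψ v e + ψ v f) :
    ∑ e, w e ^ 2 * ∑ v ∈ ends e, ψ v e = 0 := by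
  have := Fintype.ofFinite V
  have hdiag (e : G.edgeSet) : P e e = 0 := by
    obtain ⟨v, hv⟩ : (ends e).Nonempty := card_pos.1 (by rw [card_ends]; exact two_pos)
    rw [hP e e v hv hv, CharTwo.add_self_eq_zero]
  calc ∑ e, w e ^ 2 * ∑ v ∈ ends e, ψ v e
      = ∑ v, ∑ e with v ∈ ends e, w e ^ 2 * ψ v e := by simp only [mul_sum, ← sum_ends_comm]
    _ = ∑ v, ∑ e with v ∈ ends e, ∑ f with v ∈ ends f, w e * w f * P e f * N.defect e f := by
        refine sum_congr rfl fun v _ => ?_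
        rw [← N.sum_sum_mul_defect_vertex hw]
        refine sum_congr rfl fun e he => sum_congr rfl fun f hf => ?_
        rw [hP e f v (mem_filter.1 he).2 (mem_filter.1 hf).2]
    _ = ∑ e, ∑ f, w e * w f * P e f * N.defect e f :=
        (sum_sum_eq_sum_vertex (fun e => by rw [hdiag, mul_zero, zero_mul])
          fun e f h => by rw [N.defect_of_disjoint h, mul_zero]).symm
    _ = 0 := N.sum_sum_mul_defect hleft hright

end VanKampenWitness

section Stress

variable {V : Type*} {G : SimpleGraph V} [DecidableEq V] {R : Type*} [CommRing R]

/-- The sum of the coordinates of the two endpoints of an edge. -/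
def endSum (x : V → R) (e : G.edgeSet) : R := ∑ v ∈ ends e, x v

/-- The product of the coordinates of the two endpoints of an edge. -/
def endProd (x : V → R) (e : G.edgeSet) : R := ∏ v ∈ ends e, x v

lemma exists_ends_eq_pair {e : G.edgeSet} {v : V} (hv : v ∈ ends e) :
    ∃ u, v ≠ u ∧ G.Adj v u ∧ ends e = {v, u} := by
  obtain ⟨u, hu⟩ := Sym2.mem_iff_exists.1 (mem_ends.1 hv)
  have hadj : G.Adj v u := by rw [← SimpleGraph.mem_edgeSet, ← hu]; exact e.2
  exact ⟨u, hadj.ne, hadj, ends_eq_pair hu⟩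

lemma endProd_eq (x : V → R) {e : G.edgeSet} {v : V} (hv : v ∈ ends e) :
    endProd x e = x v * (endSum x e - x v) := by
  obtain ⟨u, hne, -, he⟩ := exists_ends_eq_pair hv
  rw [endProd, endSum, he, prod_pair hne, sum_pair hne, add_sub_cancel_left]

/-- The coordinate of the endpoint of color `b` of an edge. -/
def colorCoord (c : G.Coloring Bool) (x : V → R) (b : Bool) (e : G.edgeSet) : R :=
  ∑ v ∈ ends e with c v = b, x v

lemma colorCoord_eq [CharP R 2] {c : G.Coloring Bool} {x : V → R} {b : Bool} {e : G.edgeSet} {v : V}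
    (hv : v ∈ ends e) : colorCoord c x b e = if c v = b then x v else endSum x e + x v := by
  obtain ⟨u, hne, hadj, he⟩ := exists_ends_eq_pair hv
  have hc := c.valid hadj
  rw [colorCoord, endSum, he, sum_filter, sum_pair hne, sum_pair hne]
  cases b <;> cases hcv : c v <;> cases hcu : c u <;>
    simp_all [add_right_comm, CharTwo.add_self_eq_zero]

variable [Fintype G.edgeSet] {x : V → R} {w : G.edgeSet → R} {d : ℕ}

/-- A stress of degree less than `d` of the points `x`: edge weights which are balanced after
multiplication by any of the first `d` powers of `endSum x`. -/
def IsStress (x : V → R) (d : ℕ) (w : G.edgeSet → R) : Prop :=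
  ∀ r : Fin d, IsBalanced fun e => w e * endSum x e ^ (r : ℕ)

lemma IsStress.isBalanced_mul (hw : IsStress x d w) {q : G.edgeSet → R}
    (hq : ∀ v, ∃ c : Fin d → R, ∀ e, v ∈ ends e → q e = ∑ r, c r * endSum x e ^ (r : ℕ)) :
    IsBalanced fun e => w e * q e := by
  intro v
  obtain ⟨c, hc⟩ := hq v
  calc ∑ e with v ∈ ends e, w e * q e
      = ∑ e with v ∈ ends e, ∑ r, c r * (w e * endSum x e ^ (r : ℕ)) := by
        refine sum_congr rfl fun e he => ?_
        rw [hc e (mem_filter.1 he).2, mul_sum]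
        exact sum_congr rfl fun r _ => by ring
    _ = 0 := by
        rw [sum_comm]
        simp only [← mul_sum, hw _ v, mul_zero, sum_const_zero]

lemma IsStress.isBalanced_mul_of_affine (hw : IsStress x 2 w) {q : G.edgeSet → R}
    (hq : ∀ v, ∃ a b, ∀ e, v ∈ ends e → q e = a + b * endSum x e) :
    IsBalanced fun e => w e * q e :=
  hw.isBalanced_mul fun v =>
    let ⟨a, b, h⟩ := hq v
    ⟨![a, b], fun e he => by simp [Fin.sum_univ_two, h e he]⟩

lemma IsStress.isBalanced_mul_of_quadratic (hw : IsStress x 3 w) {q : G.edgeSet → R}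
    (hq : ∀ v, ∃ a b c, ∀ e, v ∈ ends e → q e = a + b * endSum x e + c * endSum x e ^ 2) :
    IsBalanced fun e => w e * q e :=
  hw.isBalanced_mul fun v =>
    let ⟨a, b, c, h⟩ := hq v
    ⟨![a, b, c], fun e he => by simp [Fin.sum_univ_three, h e he]⟩

lemma IsStress.isBalanced [NeZero d] (hw : IsStress x d w) : IsBalanced w := by
  simpa using hw 0

variable [Finite V] [CharP R 2]

theorem IsStress.sum_sq_mul_endProd (N : VanKampenWitness G R) (hw : IsStress x 3 w) :
    ∑ e, (w e * endSum x e) ^ 2 * endProd x e = 0 := by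
  have hprod {e : G.edgeSet} {v : V} (hv : v ∈ ends e) :
      endProd x e = x v * endSum x e + x v ^ 2 := by
    rw [endProd_eq x hv, CharTwo.sub_eq_add]
    ring
  /- `P` is half of a resultant: writing `s` and `p` for `endSum` and `endProd`, the resultant of
  `T ^ 2 + s e * T + p e` and `T ^ 2 + s f * T + p f` is `P e f + P f e`. -/
  have key := N.sum_sq_mul_eq_zero (ψ := fun v e => x v ^ 2 * endProd x e)
    (P := fun e f => endProd x e ^ 2 + endSum x e ^ 2 * endProd x f +
      endSum x e * endProd x e * endSum x f + endProd x e * endProd x f)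
    hw.isBalanced
    (fun f => hw.isBalanced_mul_of_quadratic fun v => ⟨x v ^ 4 + x v ^ 2 * endProd x f,
      x v ^ 2 * endSum x f + x v * endProd x f, x v ^ 2 + endProd x f + x v * endSum x f,
      fun e he => by
        rw [hprod he]
        linear_combination (x v ^ 3 * endSum x e) * CharTwo.two_eq_zero (R := R)⟩)
    (fun e => hw.isBalanced_mul_of_quadratic fun v =>
      ⟨endProd x e ^ 2 + (endSum x e ^ 2 + endProd x e) * x v ^ 2,
      (endSum x e ^ 2 + endProd x e) * x v + endSum x e * endProd x e, 0, fun f hf => by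
        rw [hprod hf]
        ring⟩)
    (fun e f v he hf => by
      simp only [hprod he, hprod hf]
      linear_combination (x v ^ 2 * endSum x e ^ 2 + x v ^ 3 * endSum x e +
        x v * endSum x e ^ 2 * endSum x f + x v ^ 2 * endSum x e * endSum x f) *
          CharTwo.two_eq_zero (R := R))
  rw [← key]
  refine sum_congr rfl fun e _ => ?_
  rw [← sum_mul, mul_pow, mul_assoc, endSum, CharTwo.sum_sq]

theorem IsStress.sum_sq_mul_endProd_of_coloring (N : VanKampenWitness G R) (c : G.Coloring Bool)
    (hw : IsStress x 2 w) : ∑ e, w e ^ 2 * endProd x e = 0 := by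
  have key := N.sum_sq_mul_eq_zero (ψ := fun v e => if c v then endProd x e else 0)
    (P := fun e f => colorCoord c x true e * (colorCoord c x false e + colorCoord c x false f))
    hw.isBalanced
    (fun f => hw.isBalanced_mul_of_affine fun v => if hv : c v then
        ⟨x v * (x v + colorCoord c x false f), x v, fun e he => by
          simp only [colorCoord_eq he, hv, Bool.true_eq_false, if_true, if_false]
          ring⟩
      else
        ⟨x v * (x v + colorCoord c x false f), x v + colorCoord c x false f, fun e he => by
          simp only [colorCoord_eq he, hv, Bool.false_eq_true, if_true, if_false]
          ring⟩)
    (fun e => hw.isBalanced_mul_of_affine fun v => if hv : c v then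
        ⟨colorCoord c x true e * (colorCoord c x false e + x v), colorCoord c x true e,
          fun f hf => by
            simp only [colorCoord_eq hf, hv, Bool.true_eq_false, if_false]
            ring⟩
      else
        ⟨colorCoord c x true e * (colorCoord c x false e + x v), 0, fun f hf => by
          simp [colorCoord_eq hf, hv]⟩)
    (fun e f v he hf => by
      by_cases hv : c v
      · simp only [colorCoord_eq he, colorCoord_eq hf, endProd_eq x he, endProd_eq x hf, hv,
          Bool.true_eq_false, if_true, if_false, CharTwo.sub_eq_add]
        ring
      · simp [colorCoord_eq he, colorCoord_eq hf, hv, CharTwo.add_self_eq_zero])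
  rw [← key]
  refine sum_congr rfl fun e _ => ?_
  obtain ⟨u, v, hne, he⟩ := exists_eq_mk e
  have hc : c u ≠ c v := c.valid (by rw [← SimpleGraph.mem_edgeSet, ← he]; exact e.2)
  rw [ends_eq_pair he, sum_pair hne]
  cases hcv : c v <;> cases hcu : c u <;> simp_all

end Stress

section GenericPoint

open MvPolynomial

variable {V : Type*} {G : SimpleGraph V}

lemma pderiv_sq_mul {R : Type*} [CommRing R] [CharP R 2] (a : V) (p q : MvPolynomial V R) :
    pderiv a (q ^ 2 * p) = q ^ 2 * pderiv a p := by
  simp [Derivation.leibniz, Derivation.leibniz_pow, CharTwo.two_eq_zero]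

/-- The field of rational functions over the field with two elements in the coordinates of the
vertices. -/
abbrev GenericField (V : Type*) : Type _ := FractionRing (MvPolynomial V (ZMod 2))

/-- The vertices placed on a line, with algebraically independent coordinates. -/
noncomputable def genericPoint (v : V) : GenericField V :=
  algebraMap (MvPolynomial V (ZMod 2)) (GenericField V) (X v)

lemma genericPoint_injective : Function.Injective (genericPoint : V → GenericField V) :=
  (IsFractionRing.injective _ _).comp X_injective

variable [DecidableEq V]

lemma endSum_genericPoint_ne_zero (e : G.edgeSet) : endSum genericPoint e ≠ 0 := by
  obtain ⟨u, v, hne, he⟩ := exists_eq_mk e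
  rw [endSum, ends_eq_pair he, sum_pair hne, Ne, CharTwo.add_eq_zero]
  exact genericPoint_injective.ne hne

lemma pderiv_pderiv_endProd_X {R : Type*} [CommRing R] (e : G.edgeSet) {f : G.edgeSet} {a b : V}
    (hf : (f : Sym2 V) = s(a, b)) :
    pderiv b (pderiv a (endProd (X : V → MvPolynomial V R) e)) = if e = f then 1 else 0 := by
  obtain ⟨u, v, hne, he⟩ := exists_eq_mk e
  rw [endProd, ends_eq_pair he, prod_pair hne]
  simp only [Subtype.ext_iff, he, hf, Sym2.eq_iff, Derivation.leibniz, smul_eq_mul, map_add,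
    pderiv_X, Pi.single_apply]
  split_ifs <;> simp_all

variable [Fintype G.edgeSet]

/-- In characteristic 2 derivations are linear over squares, and `∂²/∂x_a∂x_b` kills all the
monomials `endProd X e` except that of the edge `ab`. -/
lemma eq_zero_of_sum_sq_mul_endProd_X {R : Type*} [CommRing R] [IsReduced R] [CharP R 2]
    {q : G.edgeSet → MvPolynomial V R} (h : ∑ e, q e ^ 2 * endProd X e = 0) : q = 0 := by
  funext f
  obtain ⟨a, b, -, hf⟩ := exists_eq_mk f
  have hderiv := congrArg (fun p => pderiv b (pderiv a p)) h
  simp only [map_sum, pderiv_sq_mul, pderiv_pderiv_endProd_X _ hf, mul_ite, mul_one, mul_zero,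
    sum_ite_eq', mem_univ, if_true, map_zero] at hderiv
  exact pow_eq_zero_iff two_ne_zero |>.1 hderiv

theorem eq_zero_of_sum_sq_mul_endProd_genericPoint {w : G.edgeSet → GenericField V}
    (h : ∑ e, w e ^ 2 * endProd genericPoint e = 0) : w = 0 := by
  obtain ⟨b, hb⟩ := IsLocalization.exist_integer_multiples_of_finite
    (nonZeroDivisors (MvPolynomial V (ZMod 2))) w
  choose q hq using hb
  have hq0 : q = 0 := eq_zero_of_sum_sq_mul_endProd_X <|
    IsFractionRing.injective (MvPolynomial V (ZMod 2)) (GenericField V) <| by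
      have hprod (e : G.edgeSet) : algebraMap (MvPolynomial V (ZMod 2)) (GenericField V)
          (endProd X e) = endProd genericPoint e := map_prod _ _ _
      simp only [map_sum, map_mul, map_pow, hq, hprod, Algebra.smul_def, mul_pow, mul_assoc,
        ← mul_sum, h, mul_zero, map_zero]
  funext e
  have hb0 := hq e
  rw [hq0, Pi.zero_apply, map_zero, Algebra.smul_def, eq_comm, mul_eq_zero] at hb0
  exact hb0.resolve_left (IsFractionRing.to_map_ne_zero_of_mem_nonZeroDivisors b.2)

end GenericPoint

section Dimension

open Module

lemma surjective_of_forall_sum_mul_eq_zero {F ι M : Type*} [Field F] [Fintype ι]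
    [AddCommGroup M] [Module F M] {T : M →ₗ[F] ι → F}
    (hT : ∀ w : ι → F, (∀ m, ∑ i, w i * T m i = 0) → w = 0) : Function.Surjective T := by
  classical
  rw [← LinearMap.range_eq_top]
  by_contra hne
  obtain ⟨φ, hφ, hle⟩ := Submodule.exists_le_ker_of_lt_top _ (lt_top_iff_ne_top.2 hne)
  have hw : (fun i => φ fun j => if i = j then 1 else 0) = 0 := hT _ fun m => by
    have hm : φ (T m) = 0 := hle ⟨m, rfl⟩
    rw [LinearMap.pi_apply_eq_sum_univ] at hm
    simpa only [mul_comm, smul_eq_mul] using hm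
  refine hφ (LinearMap.ext fun y => ?_)
  rw [LinearMap.pi_apply_eq_sum_univ]
  exact sum_eq_zero fun i _ => by rw [congrFun hw i, Pi.zero_apply, smul_zero]

lemma card_add_finrank_le {F ι M N : Type*} [Field F] [Fintype ι] [AddCommGroup M] [Module F M]
    [FiniteDimensional F M] [AddCommGroup N] [Module F N] {T : M →ₗ[F] ι → F} {Q : N →ₗ[F] M}
    (hT : Function.Surjective T) (hQ : Function.Injective Q) (hTQ : T ∘ₗ Q = 0) :
    Fintype.card ι + finrank F N ≤ finrank F M := by
  have hker : finrank F N ≤ finrank F (LinearMap.ker T) :=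
    (LinearMap.finrank_range_of_inj hQ).symm.trans_le
      (Submodule.finrank_mono (LinearMap.range_le_ker_iff.2 hTQ))
  rw [← T.finrank_range_add_finrank_ker, LinearMap.range_eq_top.2 hT, finrank_top,
    finrank_fintype_fun_eq_card]
  gcongr

lemma eq_zero_of_forall_quadratic {V R : Type*} [Fintype V] [CommRing R] [IsDomain R] {x : V → R}
    (hV : 3 ≤ Fintype.card V) (hx : Function.Injective x) {a b c : R}
    (h : ∀ v, a + b * x v + c * x v ^ 2 = 0) : a = 0 ∧ b = 0 ∧ c = 0 := by
  obtain ⟨φ⟩ : Nonempty (Fin 3 ↪ V) := Function.Embedding.nonempty_of_card_le (by simpa using hV)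
  have hzero : ![a, b, c] = 0 :=
    Matrix.eq_zero_of_forall_index_sum_pow_mul_eq_zero (hx.comp φ.injective) fun j => by
      simpa [Fin.sum_univ_three, mul_comm] using h (φ j)
  simpa using hzero

section Kernels

variable {V R : Type*} [CommRing R]

/-- A six-dimensional space of vectors on which `stressMap G x 3` vanishes in characteristic 2. -/
def quadraticKernel (x : V → R) : (Fin 6 → R) →ₗ[R] V → Fin 3 → R where
  toFun a v := ![a 0 + a 3 * x v ^ 2 + a 5 * x v ^ 4, a 1 + a 3 * x v + a 4 * x v ^ 2,
    a 2 + a 4 * x v + a 5 * x v ^ 2]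
  map_add' a b := funext fun v => by
    refine (Matrix.vec3_eq ?_ ?_ ?_).trans (Matrix.vec3_add ..).symm <;>
      simp only [Pi.add_apply] <;> ring
  map_smul' t a := funext fun v => by
    refine (Matrix.vec3_eq ?_ ?_ ?_).trans (Matrix.smul_vec3 t ..).symm <;>
      simp only [Pi.smul_apply, smul_eq_mul] <;> ring

/-- A four-dimensional space of vectors on which `stressMap G x 2` vanishes in characteristic 2. -/
def affineKernel (c : V → Bool) (x : V → R) : (Fin 4 → R) →ₗ[R] V → Fin 2 → R where
  toFun a v := ![a 0 + a 1 * x v + a 2 * x v ^ 2,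
    (if c v then a 3 else a 1 + a 3) + a 2 * x v]
  map_add' a b := funext fun v => by
    refine (Matrix.vec2_eq ?_ ?_).trans (Matrix.vec2_add ..).symm <;>
      simp only [Pi.add_apply]
    · ring
    · split_ifs <;> ring
  map_smul' t a := funext fun v => by
    refine (Matrix.vec2_eq ?_ ?_).trans (Matrix.smul_vec2 t ..).symm <;>
      simp only [Pi.smul_apply, smul_eq_mul]
    · ring
    · split_ifs <;> ring

variable [Fintype V] [IsDomain R]

lemma quadraticKernel_injective {x : V → R} (hV : 3 ≤ Fintype.card V) (hx : Function.Injective x) :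
    Function.Injective (quadraticKernel x) := by
  rw [← LinearMap.ker_eq_bot, LinearMap.ker_eq_bot']
  intro a ha
  have hcoord (v : V) (r : Fin 3) : quadraticKernel x a v r = 0 := by rw [ha]; rfl
  obtain ⟨h1, h3, h4⟩ := eq_zero_of_forall_quadratic hV hx fun v => hcoord v 1
  obtain ⟨h2, -, h5⟩ := eq_zero_of_forall_quadratic hV hx fun v => hcoord v 2
  have h0 (v : V) : a 0 + a 3 * x v ^ 2 + a 5 * x v ^ 4 = 0 := hcoord v 0
  obtain ⟨v⟩ : Nonempty V := Fintype.card_pos_iff.1 (by omega)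
  ext r
  fin_cases r
  · simpa [h3, h5] using h0 v
  all_goals assumption

lemma affineKernel_injective {c : V → Bool} {x : V → R} (hV : 3 ≤ Fintype.card V)
    (hx : Function.Injective x) : Function.Injective (affineKernel c x) := by
  rw [← LinearMap.ker_eq_bot, LinearMap.ker_eq_bot']
  intro a ha
  have hcoord (v : V) (r : Fin 2) : affineKernel c x a v r = 0 := by rw [ha]; rfl
  obtain ⟨h0, h1, h2⟩ := eq_zero_of_forall_quadratic hV hx fun v => hcoord v 0
  obtain ⟨v⟩ : Nonempty V := Fintype.card_pos_iff.1 (by omega)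
  have h3 : (if c v then a 3 else a 1 + a 3) + a 2 * x v = 0 := hcoord v 1
  ext r
  fin_cases r <;> simp_all

end Kernels

variable {V : Type*} {G : SimpleGraph V} {R : Type*} [CommRing R] [DecidableEq V]

/-- The linear map whose transpose has the stresses of degree less than `d` as its kernel. -/
def stressMap (G : SimpleGraph V) (x : V → R) (d : ℕ) : (V → Fin d → R) →ₗ[R] (G.edgeSet → R) :=
  LinearMap.pi fun e => ∑ v ∈ ends e, ∑ r : Fin d,
    endSum x e ^ (r : ℕ) • (LinearMap.proj r : (Fin d → R) →ₗ[R] R) ∘ₗ LinearMap.proj v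

lemma stressMap_apply {x : V → R} {d : ℕ} (c : V → Fin d → R) (e : G.edgeSet) :
    stressMap G x d c e = ∑ v ∈ ends e, ∑ r : Fin d, endSum x e ^ (r : ℕ) * c v r := by
  simp [stressMap]

lemma isStress_of_forall_sum_mul_stressMap [Fintype G.edgeSet] {x : V → R} {d : ℕ}
    {w : G.edgeSet → R} (h : ∀ c, ∑ e, w e * stressMap G x d c e = 0) : IsStress x d w := by
  intro r v
  have hsingle (e : G.edgeSet) : stressMap G x d (Pi.single v (Pi.single r 1)) e =
      if v ∈ ends e then endSum x e ^ (r : ℕ) else 0 := by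
    have hinner (u : V) : ∑ s : Fin d, endSum x e ^ (s : ℕ) *
        (Pi.single v (Pi.single r 1) : V → Fin d → R) u s =
          if v = u then endSum x e ^ (r : ℕ) else 0 := by
      rcases eq_or_ne v u with rfl | hne
      · simp [Pi.single_apply]
      · simp [hne, hne.symm]
    rw [stressMap_apply, sum_congr rfl fun u _ => hinner u, sum_ite_eq]
  simpa only [hsingle, mul_ite, mul_zero, ← sum_filter] using h (Pi.single v (Pi.single r 1))

variable [Fintype V] [Fintype G.edgeSet]

theorem card_edgeSet_add_finrank_le {F : Type*} [Field F] {x : V → F} {d : ℕ}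
    (hx : ∀ w : G.edgeSet → F, IsStress x d w → w = 0)
    {N : Type*} [AddCommGroup N] [Module F N] {Q : N →ₗ[F] V → Fin d → F}
    (hQ : Function.Injective Q) (hker : stressMap G x d ∘ₗ Q = 0) :
    Fintype.card G.edgeSet + finrank F N ≤ d * Fintype.card V := by
  have h := card_add_finrank_le (surjective_of_forall_sum_mul_eq_zero fun w hw =>
    hx w (isStress_of_forall_sum_mul_stressMap hw)) hQ hker
  simpa [finrank_pi_fintype, mul_comm] using h

end Dimension

section PlanarBounds

variable {V : Type*} {G : SimpleGraph V} [DecidableEq V]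

lemma stressMap_comp_quadraticKernel {R : Type*} [CommRing R] [CharP R 2] (x : V → R) :
    stressMap G x 3 ∘ₗ quadraticKernel x = 0 := by
  refine LinearMap.ext fun a => funext fun e => ?_
  obtain ⟨u, v, hne, he⟩ := exists_eq_mk e
  rw [LinearMap.comp_apply, stressMap_apply, endSum, ends_eq_pair he, sum_pair hne, sum_pair hne]
  simp only [quadraticKernel, LinearMap.coe_mk, AddHom.coe_mk, Fin.sum_univ_three,
    Fin.coe_ofNat_eq_mod, Nat.zero_mod, Nat.one_mod, Nat.mod_succ, pow_zero, pow_one, one_mul,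
    Matrix.cons_val, LinearMap.zero_apply, Pi.zero_apply]
  linear_combination (a 0 + a 1 * (x u + x v) + a 2 * (x u + x v) ^ 2 +
    (a 3 + a 4 * (x u + x v)) * (x u ^ 2 + x v ^ 2 + x u * x v) +
    a 5 * (x u ^ 4 + x v ^ 4 + x u ^ 2 * x v ^ 2 + x u * x v * (x u ^ 2 + x v ^ 2))) *
      CharTwo.two_eq_zero (R := R)

lemma stressMap_comp_affineKernel {R : Type*} [CommRing R] [CharP R 2] (x : V → R)
    (c : G.Coloring Bool) : stressMap G x 2 ∘ₗ affineKernel c x = 0 := by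
  refine LinearMap.ext fun a => funext fun e => ?_
  obtain ⟨u, v, hne, he⟩ := exists_eq_mk e
  have hc : c u ≠ c v := c.valid (by rw [← SimpleGraph.mem_edgeSet, ← he]; exact e.2)
  have hg : (if c u then a 3 else a 1 + a 3) + (if c v then a 3 else a 1 + a 3) =
      a 1 + 2 * a 3 := by
    cases hu : c u <;> cases hv : c v <;> simp_all <;> ring
  rw [LinearMap.comp_apply, stressMap_apply, endSum, ends_eq_pair he, sum_pair hne, sum_pair hne]
  simp only [affineKernel, LinearMap.coe_mk, AddHom.coe_mk, Fin.sum_univ_two,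
    Fin.coe_ofNat_eq_mod, Nat.zero_mod, Nat.mod_succ, pow_zero, pow_one, one_mul, Matrix.cons_val,
    LinearMap.zero_apply, Pi.zero_apply]
  linear_combination (x u + x v) * hg + (a 0 + (a 1 + a 3) * (x u + x v) +
    a 2 * (x u ^ 2 + x v ^ 2 + x u * x v)) * CharTwo.two_eq_zero (R := R)

variable [Fintype V] [Fintype G.edgeSet]

theorem VanKampenWitness.card_edgeSet_add_six_le (N : VanKampenWitness G (GenericField V))
    (hV : 3 ≤ Fintype.card V) : Fintype.card G.edgeSet + 6 ≤ 3 * Fintype.card V := by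
  have hx : ∀ w : G.edgeSet → GenericField V, IsStress genericPoint 3 w → w = 0 := fun w hw => by
    have hzero := eq_zero_of_sum_sq_mul_endProd_genericPoint (hw.sum_sq_mul_endProd N)
    exact funext fun e =>
      (mul_eq_zero.1 (congrFun hzero e)).resolve_right (endSum_genericPoint_ne_zero e)
  simpa using card_edgeSet_add_finrank_le hx (quadraticKernel_injective hV genericPoint_injective)
    (stressMap_comp_quadraticKernel genericPoint)

theorem VanKampenWitness.card_edgeSet_add_four_le (N : VanKampenWitness G (GenericField V))
    (c : G.Coloring Bool) (hV : 3 ≤ Fintype.card V) :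
    Fintype.card G.edgeSet + 4 ≤ 2 * Fintype.card V := by
  simpa using card_edgeSet_add_finrank_le
    (fun w hw => eq_zero_of_sum_sq_mul_endProd_genericPoint (hw.sum_sq_mul_endProd_of_coloring N c))
    (affineKernel_injective hV genericPoint_injective)
    (stressMap_comp_affineKernel genericPoint c)

end PlanarBounds

namespace WeakPlaneDrawing

variable {V : Type*} {G : SimpleGraph V}

/-- Disjoint regions around the vertices, such that the union of any two adjacent ones joins the
corresponding vertices, give a drawing in which the region of an edge is the union of the regions
of its endpoints. -/
def ofRegions {X : Type*} [TopologicalSpace X] (pos : V → X) (region : V → Set X)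
    (pos_mem : ∀ v, pos v ∈ region v) (disj : Pairwise fun u v => Disjoint (region u) (region v))
    (joined : ∀ u v, G.Adj u v → JoinedIn (region u ∪ region v) (pos u) (pos v)) :
    WeakPlaneDrawing G X where
  pos := pos
  pos_injective u v h := by
    by_contra hne
    exact (disj hne).ne_of_mem (pos_mem u) (pos_mem v) h
  arc e := ⋃ v ∈ (e : Sym2 V), region v
  joinedIn e u v he := by
    have hadj : G.Adj u v := by rw [← SimpleGraph.mem_edgeSet, ← he]; exact e.2
    refine (joined u v hadj).mono (Set.union_subset ?_ ?_) <;>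
      exact Set.subset_biUnion_of_mem (u := region) (by simp [he])
  pos_notMem_arc e v hv := by
    simp only [Set.mem_iUnion, not_exists]
    intro u hu
    exact (disj (ne_of_mem_of_not_mem hu hv).symm).notMem_of_mem_left (pos_mem v)
  disjoint_arc e f h := by
    simp only [Set.disjoint_iUnion_left, Set.disjoint_iUnion_right]
    exact fun u hu v hv => disj (ne_of_mem_of_not_mem hu (h v hv)).symm

variable [Finite V]

theorem card_edgeSet_add_six_le (D : WeakPlaneDrawing G ℂ) (hV : 3 ≤ Nat.card V) :
    Nat.card G.edgeSet + 6 ≤ 3 * Nat.card V := by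
  classical
  have := Fintype.ofFinite V
  rw [Nat.card_eq_fintype_card] at hV ⊢
  obtain ⟨N⟩ := D.nonempty_vanKampenWitness (GenericField V)
  simpa using N.card_edgeSet_add_six_le hV

theorem card_edgeSet_add_four_le (D : WeakPlaneDrawing G ℂ) (c : G.Coloring Bool)
    (hV : 3 ≤ Nat.card V) : Nat.card G.edgeSet + 4 ≤ 2 * Nat.card V := by
  classical
  have := Fintype.ofFinite V
  rw [Nat.card_eq_fintype_card] at hV ⊢
  obtain ⟨N⟩ := D.nonempty_vanKampenWitness (GenericField V)
  simpa using N.card_edgeSet_add_four_le c hV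

end WeakPlaneDrawing

section RelationGraph

variable {α β : Type*} {r : α → β → Prop}

/-- The bipartite graph of a relation. -/
def relationGraph (r : α → β → Prop) : SimpleGraph (α ⊕ β) where
  Adj
    | .inl a, .inr b => r a b
    | .inr b, .inl a => r a b
    | _, _ => False
  symm := ⟨by rintro (a | b) (a' | b') h <;> exact h⟩
  loopless := ⟨by rintro (a | b) h <;> exact h⟩

/-- The coloring of the graph of a relation by the two sides. -/
def relationGraph.coloring (r : α → β → Prop) : (relationGraph r).Coloring Bool :=
  .mk Sum.isLeft (by rintro (a | b) (a' | b') h <;> first | exact h.elim | simp)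

lemma mul_card_le_card_edgeSet_relationGraph [Finite α] [Finite β] {k : ℕ}
    (h : ∀ b, ∃ s : Finset α, s.card = k ∧ ∀ a ∈ s, r a b) :
    k * Nat.card β ≤ Nat.card (relationGraph r).edgeSet := by
  have := Fintype.ofFinite β
  choose s hcard hs using h
  have hsum : Nat.card (Σ b, s b) = k * Nat.card β := by
    simp [hcard, mul_comm]
  rw [← hsum]
  refine Nat.card_le_card_of_injective
    (fun p : Σ b, s b => ⟨s(.inl p.2.1, .inr p.1), hs p.1 p.2 p.2.2⟩) ?_
  rintro ⟨b, a, ha⟩ ⟨b', a', ha'⟩ h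
  obtain ⟨rfl, rfl⟩ : a = a' ∧ b = b' := by simpa using congrArg Subtype.val h
  rfl

end RelationGraph

end PlaneGraph

namespace SimpleDrawing

open Set PlaneGraph

variable {V : Type*} {G : SimpleGraph V} (D : SimpleDrawing G)

lemma image_curve_Icc (e : G.edgeSet) :
    D.curve e '' Icc 0 1 = D.interiorArc e ∪ D.pos '' {v | v ∈ (e : Sym2 V)} := by
  obtain ⟨u, v, -, he⟩ := exists_eq_mk e
  have hpair : D.pos '' {w | w ∈ (e : Sym2 V)} = {D.pos u, D.pos v} := by
    rw [← image_pair]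
    congr 1
    ext w
    simp [he]
  rw [← Ioo_union_both zero_le_one, image_union, image_pair, hpair, interiorArc]
  rcases D.curve_ends e u v he with ⟨h0, h1⟩ | ⟨h0, h1⟩
  · rw [h0, h1]
  · rw [h0, h1, pair_comm]

lemma pos_notMem_interiorArc (v : V) (e : G.edgeSet) : D.pos v ∉ D.interiorArc e := by
  rintro ⟨t, ht, h⟩
  exact D.curve_avoid e t ht ⟨v, h.symm⟩

lemma pos_mem_image_curve_iff {v : V} {e : G.edgeSet} :
    D.pos v ∈ D.curve e '' Icc 0 1 ↔ v ∈ (e : Sym2 V) := by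
  rw [image_curve_Icc, mem_union, D.pos_inj.mem_set_image]
  simp [pos_notMem_interiorArc]

lemma joinedIn_image_curve {e : G.edgeSet} {u v : V} (hu : u ∈ (e : Sym2 V))
    (hv : v ∈ (e : Sym2 V)) : JoinedIn (D.curve e '' Icc 0 1) (D.pos u) (D.pos v) :=
  (((convex_Icc 0 1).isPathConnected ⟨0, by simp⟩).image' (D.curve_cont e)).joinedIn _
    (D.pos_mem_image_curve_iff.2 hu) _ (D.pos_mem_image_curve_iff.2 hv)

lemma joinedIn_insert_interiorArc {e : G.edgeSet} {v : V} (hv : v ∈ (e : Sym2 V)) {z : ℝ × ℝ}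
    (hz : z ∈ D.interiorArc e) : JoinedIn (insert (D.pos v) (D.interiorArc e)) (D.pos v) z := by
  have joined {a : ℝ} {s : Set ℝ} (hs : Convex ℝ s) (hsub : s ⊆ Icc 0 1)
      (hins : insert a (Ioo 0 1) = s) (ha : D.curve e a = D.pos v) :
      JoinedIn (insert (D.pos v) (D.interiorArc e)) (D.pos v) z := by
    subst hins
    rw [← ha, interiorArc, ← image_insert_eq]
    exact ((hs.isPathConnected ⟨a, mem_insert a _⟩).image' ((D.curve_cont e).mono hsub)).joinedIn _
      (mem_image_of_mem _ (mem_insert a _)) _ (image_mono (subset_insert _ _) hz)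
  obtain ⟨u, hu⟩ := Sym2.mem_iff_exists.1 hv
  rcases D.curve_ends e v u hu with ⟨h, -⟩ | ⟨-, h⟩
  · exact joined (convex_Ico 0 1) Ico_subset_Icc_self (Ioo_insert_left one_pos) h
  · exact joined (convex_Ioc 0 1) Ioc_subset_Icc_self (Ioo_insert_right one_pos) h

/-- The restriction of a drawing to a subgraph. -/
def restrict {H : SimpleGraph V} (h : H ≤ G) : SimpleDrawing H where
  pos := D.pos
  pos_inj := D.pos_inj
  curve e := D.curve (inclusion (SimpleGraph.edgeSet_mono h) e)
  curve_cont _ := D.curve_cont _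
  curve_inj _ := D.curve_inj _
  curve_ends e := D.curve_ends (inclusion (SimpleGraph.edgeSet_mono h) e)
  curve_avoid _ := D.curve_avoid _
  simple _ _ hne := D.simple _ _ ((inclusion_injective _).ne hne)

namespace IsPlane

variable {D}

/-- A plane drawing is a weak plane drawing in which the region of an edge is its closed arc. -/
def toWeakPlaneDrawing (hD : D.IsPlane) : WeakPlaneDrawing G (ℝ × ℝ) where
  pos := D.pos
  pos_injective := D.pos_inj
  arc e := D.curve e '' Icc 0 1
  joinedIn e u v he := D.joinedIn_image_curve (by simp [he]) (by simp [he])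
  pos_notMem_arc e v hv := by rwa [pos_mem_image_curve_iff]
  disjoint_arc e f h := by
    have hne : e ≠ f := by
      rintro rfl
      obtain ⟨u, v, -, he⟩ := exists_eq_mk e
      exact h u (by simp [he]) (by simp [he])
    have hint : Disjoint (D.interiorArc e) (D.interiorArc f) :=
      disjoint_iff_inter_eq_empty.2 (not_nonempty_iff_eq_empty.1 fun hcr => hD e f ⟨hne, hcr⟩)
    rw [D.image_curve_Icc f, disjoint_union_right]
    refine ⟨?_, disjoint_right.2 ?_⟩
    · rw [image_curve_Icc, disjoint_union_left]
      refine ⟨hint, disjoint_left.2 ?_⟩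
      rintro _ ⟨v, -, rfl⟩
      exact D.pos_notMem_interiorArc v f
    · rintro _ ⟨v, hv, rfl⟩ hve
      exact h v (D.pos_mem_image_curve_iff.1 hve) hv

theorem card_edgeSet_add_six_le [Finite V] (hD : D.IsPlane) (hV : 3 ≤ Nat.card V) :
    Nat.card G.edgeSet + 6 ≤ 3 * Nat.card V :=
  (hD.toWeakPlaneDrawing.map Complex.equivRealProdCLM.symm
    Complex.equivRealProdCLM.symm.injective).card_edgeSet_add_six_le hV

end IsPlane

/-- The graph on the edges of `G` whose edges are the crossings of the drawing. -/
def crossingGraph : SimpleGraph G.edgeSet where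
  Adj := D.Crosses
  symm := ⟨fun _ _ h => ⟨h.1.symm, by rw [inter_comm]; exact h.2⟩⟩
  loopless := ⟨fun _ h => h.1 rfl⟩

/-- The bipartite graph between the vertices and the crossings of the drawing, in which a crossing
is adjacent to the endpoints of its two edges. -/
def crossingIncidenceGraph : SimpleGraph (V ⊕ D.crossingGraph.edgeSet) :=
  relationGraph fun v x => ∃ e ∈ (x : Sym2 G.edgeSet), v ∈ (e : Sym2 V)

variable {D}

lemma Crosses.notMem_of_mem {e f : G.edgeSet} (h : D.Crosses e f) {v : V}
    (he : v ∈ (e : Sym2 V)) : v ∉ (f : Sym2 V) := by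
  obtain ⟨hne, z, hze, hzf⟩ := h
  intro hf
  have hz : z = D.pos v := D.simple e f hne
    ⟨image_mono Ioo_subset_Icc_self hze, image_mono Ioo_subset_Icc_self hzf⟩
    ⟨D.pos_mem_image_curve_iff.2 he, D.pos_mem_image_curve_iff.2 hf⟩
  exact D.pos_notMem_interiorArc v e (hz ▸ hze)

lemma exists_mem_interiorArc (D : SimpleDrawing G) (x : D.crossingGraph.edgeSet) :
    ∃ z, ∀ e ∈ (x : Sym2 G.edgeSet), z ∈ D.interiorArc e := by
  obtain ⟨⟨e, f⟩, h : D.Crosses e f⟩ := x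
  obtain ⟨z, hze, hzf⟩ := h.2
  exact ⟨z, Sym2.ball.2 ⟨hze, hzf⟩⟩

lemma four_mul_card_edgeSet_crossingGraph_le [Finite V] (D : SimpleDrawing G) :
    4 * Nat.card D.crossingGraph.edgeSet ≤ Nat.card D.crossingIncidenceGraph.edgeSet := by
  classical
  refine mul_card_le_card_edgeSet_relationGraph ?_
  rintro ⟨⟨e, f⟩, h : D.Crosses e f⟩
  have hdisj : Disjoint (ends e) (ends f) :=
    Finset.disjoint_left.2 fun v he hf => h.notMem_of_mem (mem_ends.1 he) (mem_ends.1 hf)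
  refine ⟨ends e ∪ ends f, ?_, fun v hv => ?_⟩
  · rw [Finset.card_union_of_disjoint hdisj, card_ends, card_ends]
  · rcases Finset.mem_union.1 hv with hv | hv
    · exact ⟨e, Sym2.mem_mk_left e f, mem_ends.1 hv⟩
    · exact ⟨f, Sym2.mem_mk_right e f, mem_ends.1 hv⟩

lemma Crosses.of_restrict {H : SimpleGraph V} {h : H ≤ G} {e f : H.edgeSet}
    (hcr : (D.restrict h).Crosses e f) :
    D.Crosses (inclusion (SimpleGraph.edgeSet_mono h) e)
      (inclusion (SimpleGraph.edgeSet_mono h) f) :=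
  ⟨(inclusion_injective _).ne hcr.1, hcr.2⟩

lemma exists_isPlane_restrict [Finite V] (D : SimpleDrawing G) :
    ∃ (H : SimpleGraph V) (h : H ≤ G), (D.restrict h).IsPlane ∧
      Nat.card G.edgeSet ≤ Nat.card H.edgeSet + Nat.card D.crossingGraph.edgeSet := by
  let removed : Set (Sym2 V) :=
    range fun x : D.crossingGraph.edgeSet => ((x : Sym2 G.edgeSet).out.1 : Sym2 V)
  refine ⟨G.deleteEdges removed, SimpleGraph.deleteEdges_le _, fun e f h => ?_, ?_⟩
  · have kept (e : (G.deleteEdges removed).edgeSet) : (e : Sym2 V) ∉ removed :=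
      ((SimpleGraph.edgeSet_deleteEdges removed).subset e.2).2
    let x : D.crossingGraph.edgeSet := ⟨s(_, _), Crosses.of_restrict h⟩
    have hout : (x : Sym2 G.edgeSet).out.1 ∈ (x : Sym2 G.edgeSet) := Sym2.out_fst_mem _
    rcases Sym2.mem_iff.1 hout with he | hf
    · exact kept e ⟨x, congrArg Subtype.val he⟩
    · exact kept f ⟨x, congrArg Subtype.val hf⟩
  · rw [SimpleGraph.edgeSet_deleteEdges, Nat.card_coe_set_eq, Nat.card_coe_set_eq,
      ← tsub_le_iff_right]
    exact (Nat.sub_le_sub_left (Finite.card_range_le _) _).trans (le_ncard_sdiff _ _)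

namespace IsOnePlane

lemma eq_mk_of_mem (hD : D.IsOnePlane) {x : D.crossingGraph.edgeSet} {e f : G.edgeSet}
    (he : e ∈ (x : Sym2 G.edgeSet)) (h : D.Crosses e f) : (x : Sym2 G.edgeSet) = s(e, f) := by
  obtain ⟨f', hx⟩ := Sym2.mem_iff_exists.1 he
  have hcr : D.Crosses e f' := by
    have := x.2
    rwa [hx] at this
  rw [hx, hD e h hcr]

lemma eq_of_mem (hD : D.IsOnePlane) {x y : D.crossingGraph.edgeSet} {e : G.edgeSet}
    (hx : e ∈ (x : Sym2 G.edgeSet)) (hy : e ∈ (y : Sym2 G.edgeSet)) : x = y := by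
  obtain ⟨f, hf⟩ := Sym2.mem_iff_exists.1 hy
  have hcr : D.Crosses e f := by
    have := y.2
    rwa [hf] at this
  exact Subtype.ext ((hD.eq_mk_of_mem hx hcr).trans hf.symm)

lemma disjoint_interiorArc (hD : D.IsOnePlane) {x y : D.crossingGraph.edgeSet} (hxy : x ≠ y)
    {e f : G.edgeSet} (he : e ∈ (x : Sym2 G.edgeSet)) (hf : f ∈ (y : Sym2 G.edgeSet)) :
    Disjoint (D.interiorArc e) (D.interiorArc f) := by
  by_contra h
  have hne : e ≠ f := by
    rintro rfl
    exact hxy (hD.eq_of_mem he hf)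
  have hx := hD.eq_mk_of_mem he ⟨hne, not_disjoint_iff_nonempty_inter.1 h⟩
  exact hxy (hD.eq_of_mem (by rw [hx]; exact Sym2.mem_mk_right e f) hf)

theorem nonempty_weakPlaneDrawing_crossingIncidenceGraph (hD : D.IsOnePlane) :
    Nonempty (WeakPlaneDrawing D.crossingIncidenceGraph (ℝ × ℝ)) := by
  choose z hz using D.exists_mem_interiorArc
  let star : V ⊕ D.crossingGraph.edgeSet → Set (ℝ × ℝ) :=
    Sum.elim (fun v => {D.pos v}) fun x => ⋃ e ∈ (x : Sym2 G.edgeSet), D.interiorArc e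
  have pos_notMem (v : V) (x : D.crossingGraph.edgeSet) : D.pos v ∉ star (.inr x) := by
    simp only [star, Sum.elim_inr, mem_iUnion, not_exists]
    exact fun e _ => D.pos_notMem_interiorArc v e
  have joined {v : V} {x : D.crossingGraph.edgeSet}
      (h : ∃ e ∈ (x : Sym2 G.edgeSet), v ∈ (e : Sym2 V)) :
      JoinedIn (star (.inl v) ∪ star (.inr x)) (D.pos v) (z x) := by
    obtain ⟨e, he, hv⟩ := h
    exact (D.joinedIn_insert_interiorArc hv (hz x e he)).mono
      (union_subset_union_right {D.pos v} (subset_biUnion_of_mem (u := D.interiorArc) he))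
  refine ⟨.ofRegions (Sum.elim D.pos z) star ?_ ?_ ?_⟩
  · rintro (v | x)
    · exact mem_singleton _
    · obtain ⟨⟨e, f⟩, h⟩ := x
      exact mem_biUnion (Sym2.mem_mk_left e f) (hz _ e (Sym2.mem_mk_left e f))
  · rintro (u | x) (v | y) hne
    · exact disjoint_singleton.2 (D.pos_inj.ne (by simpa using hne))
    · exact disjoint_singleton_left.2 (pos_notMem u y)
    · exact disjoint_singleton_right.2 (pos_notMem v x)
    · simp only [star, Sum.elim_inr, disjoint_iUnion_left, disjoint_iUnion_right]
      exact fun f hf e he => hD.disjoint_interiorArc (by simpa using hne) he hf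
  · rintro (u | x) (v | y) hadj
    · exact hadj.elim
    · exact joined hadj
    · rw [union_comm]
      exact (joined hadj).symm
    · exact hadj.elim

theorem card_edgeSet_crossingGraph_add_two_le [Finite V] (hD : D.IsOnePlane) (hV : 3 ≤ Nat.card V) :
    Nat.card D.crossingGraph.edgeSet + 2 ≤ Nat.card V := by
  obtain ⟨W⟩ := hD.nonempty_weakPlaneDrawing_crossingIncidenceGraph
  have hbound := (W.map Complex.equivRealProdCLM.symm
    Complex.equivRealProdCLM.symm.injective).card_edgeSet_add_four_le (relationGraph.coloring _)
    (by rw [Nat.card_sum]; omega)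
  have hfour := D.four_mul_card_edgeSet_crossingGraph_le
  rw [Nat.card_sum] at hbound
  omega

end IsOnePlane

end SimpleDrawing

/-- A simple 1-planar graph on `n ≥ 3` vertices has at most `4n − 8` edges. -/
theorem stmt_2 {V : Type*} [Fintype V] (G : SimpleGraph V) [Fintype G.edgeSet]
    (hn : 3 ≤ Fintype.card V)
    (h1p : ∃ D : SimpleDrawing G, D.IsOnePlane) :
    G.edgeFinset.card ≤ 4 * Fintype.card V - 8 := by
  obtain ⟨D, hD⟩ := h1p
  rw [← Nat.card_eq_fintype_card] at hn ⊢
  obtain ⟨H, _, hplane, hcard⟩ := D.exists_isPlane_restrict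
  have hedges := hplane.card_edgeSet_add_six_le hn
  have hcrossings := hD.card_edgeSet_crossingGraph_add_two_le hn
  rw [SimpleGraph.edgeFinset_card, ← Nat.card_eq_fintype_card]
  omega
end

section
/- Every planar triangulation on n ≥ 3 vertices admits an orientation (a 3-orientation) of its edges in which every vertex has out-degree at most 3; in fact, internal edges can be oriented so each internal vertex has out-degree exactly 3 and outer vertices have out-degree 0 among internal edges. -/
open SimpleGraph

/-- Reversal of darts, as a permutation. -/
def dartRev {V : Type*} (G : SimpleGraph V) : Equiv.Perm G.Dart :=
  ⟨SimpleGraph.Dart.symm, SimpleGraph.Dart.symm,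
    fun d => d.symm_symm, fun d => d.symm_symm⟩

/-- The number of cycles of a permutation, counting fixed points as cycles. -/
noncomputable def numCycles {α : Type*} [Fintype α] [DecidableEq α]
    (σ : Equiv.Perm α) : ℕ :=
  σ.cycleType.card + {x : α | σ x = x}.ncard

/-- A rotation system (combinatorial embedding) on a graph: a permutation of the darts
whose orbits are exactly the sets of darts leaving a common vertex, giving the cyclic
order of the edges around each vertex. -/
structure RotationSystem {V : Type*} [Fintype V] [DecidableEq V]
    (G : SimpleGraph V) [DecidableRel G.Adj] where
  σ : Equiv.Perm G.Dart
  fst_fixed : ∀ d : G.Dart, (σ d).toProd.1 = d.toProd.1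
  orbit_eq : ∀ d d' : G.Dart, d.toProd.1 = d'.toProd.1 → σ.SameCycle d d'

/-- The face permutation of a rotation system: its orbits are the faces. -/
def RotationSystem.facePerm {V : Type*} [Fintype V] [DecidableEq V]
    {G : SimpleGraph V} [DecidableRel G.Adj] (R : RotationSystem G) :
    Equiv.Perm G.Dart :=
  R.σ * dartRev G

/-- A rotation system is planar (describes a plane graph) when it satisfies Euler's
formula: `#vertices − #edges + #faces = 2`. -/
noncomputable def RotationSystem.IsPlanar {V : Type*} [Fintype V] [DecidableEq V]
    {G : SimpleGraph V} [DecidableRel G.Adj] (R : RotationSystem G) : Prop :=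
  (Fintype.card V : ℤ) - (G.edgeFinset.card : ℤ) + (numCycles R.facePerm : ℤ) = 2

/-! Write `e(S)` for the number of edges meeting a set `S` of vertices. By Euler's formula a
planar triangulation has `3 |V| - 6` edges, so the edges not on the outer face are three times as
many as the interior vertices. If `3 |S| ≤ e(S)` for every set `S` of interior vertices, then
Hall's theorem assigns to each interior vertex three private edges incident to it, the assignment
exhausts the edges off the outer face, and orienting each edge away from its owner gives the
3-orientation.

It suffices to bound `e(S)` when `S` induces a connected subgraph. Consider functions `g` on the
vertices and `h` on the faces such that `g` vanishes off `S`, while `h` vanishes off the faces with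
a corner in `S` and also on one of these faces. If `(g, h)` satisfies the discrete Cauchy–Riemann
equations on the edges meeting `S`, summation by parts shows that `g` has Dirichlet energy zero;
hence `g = 0`, so `h` is constant around `S`, and `h = 0`. Comparing dimensions, at most
`e(S) + 1 - |S|` faces have a corner in `S`. On the other hand, counting darts by faces, three times
that number of faces is `2 e(S)` plus the number of darts in the link of `S`, which is at least
three.
-/

open scoped Finset

theorem card_filter_mem_eq_mul {α β : Type*} [Fintype α] [DecidableEq β] {f : α → β}
    {t : Finset β} {k : ℕ} (hk : ∀ b ∈ t, #{a | f a = b} = k) : #{a | f a ∈ t} = #t * k := by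
  rw [Finset.card_eq_sum_card_fiberwise (f := f) (t := t) fun a ha => by simpa using ha]
  refine Finset.sum_const_nat fun b hb => ?_
  rw [← hk b hb, Finset.filter_filter]
  congr 1
  ext a
  simp only [Finset.mem_filter, Finset.mem_univ, true_and]
  exact ⟨And.right, fun h => ⟨h ▸ hb, h⟩⟩

section Perm

variable {α : Type*} {σ : Equiv.Perm α}

theorem sameCycle_induction [Finite α] {p : α → Prop} {a b : α} (hab : σ.SameCycle a b)
    (hσ : ∀ c, p c → p (σ c)) (ha : p a) : p b := by
  obtain ⟨n, rfl⟩ := hab.exists_nat_pow_eq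
  clear hab
  induction n with
  | zero => exact ha
  | succ n ih => exact pow_succ' σ n ▸ hσ _ ih

theorem sameCycle_iff_of_pow_three_eq_one [Finite α] (hσ : σ ^ 3 = 1) {a b : α} :
    σ.SameCycle a b ↔ b = a ∨ b = σ a ∨ b = σ (σ a) := by
  constructor
  · intro hab
    refine sameCycle_induction (p := fun b => b = a ∨ b = σ a ∨ b = σ (σ a)) hab
      (fun c hc => ?_) (.inl rfl)
    have ha : σ (σ (σ a)) = a := congr($hσ a)
    grind
  · rintro (rfl | rfl | rfl)
    exacts [.rfl, ⟨1, rfl⟩, ⟨2, rfl⟩]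

theorem numCycles_mul_of_pow_prime_eq_one [Fintype α] [DecidableEq α] {p : ℕ} [Fact p.Prime]
    (hσ : σ ^ p = 1) (hfix : ∀ a, σ a ≠ a) : numCycles σ * p = Fintype.card α := by
  have hfixed : {a | σ a = a} = ∅ := by simpa [Set.eq_empty_iff_forall_notMem] using hfix
  have hsupport : σ.support = Finset.univ := by simpa [Finset.eq_univ_iff_forall] using hfix
  have hsum := σ.sum_cycleType
  rw [Equiv.Perm.cycleType_of_pow_prime_eq_one hσ, Multiset.sum_replicate, smul_eq_mul, hsupport,
    Finset.card_univ] at hsum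
  rw [numCycles, hfixed, Set.ncard_empty, add_zero, hsum]

end Perm

section Graph

variable {V : Type*} {G : SimpleGraph V}

theorem reachable_induction {p : V → Prop} {u v : V} (huv : G.Reachable u v)
    (hp : ∀ a b, G.Adj a b → p a → p b) (hu : p u) : p v := by
  obtain ⟨w⟩ := huv
  by_contra hv
  obtain ⟨d, -, hfst, hsnd⟩ := w.exists_boundary_dart {a | p a} hu hv
  exact hsnd (hp _ _ d.adj hfst)

theorem exists_dart_edge_eq {e : Sym2 V} (he : e ∈ G.edgeSet) : ∃ d : G.Dart, d.edge = e := by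
  induction e with
  | h u v => exact ⟨⟨(u, v), he⟩, rfl⟩

theorem exists_ssubset_of_not_preconnected_induce {S : Finset V}
    (hS : ¬(G.induce (S : Set V)).Preconnected) :
    ∃ U ⊂ S, U.Nonempty ∧ ∀ u ∈ U, ∀ v ∈ S, G.Adj u v → v ∈ U := by
  classical
  simp only [Preconnected, not_forall] at hS
  obtain ⟨a, b, hab⟩ := hS
  let U : Finset V := (Finset.univ.filter ((G.induce (S : Set V)).Reachable a)).map
    (Function.Embedding.subtype _)
  have hU {v : V} (hv : v ∈ S) :
      v ∈ U ↔ (G.induce (S : Set V)).Reachable a ⟨v, hv⟩ := by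
    simp [U, hv]
  have hUS : U ⊆ S := fun v hv => by
    obtain ⟨w, -, rfl⟩ := Finset.mem_map.1 hv
    exact w.2
  refine ⟨U, ⟨hUS, fun hSU => hab ((hU b.2).1 (hSU b.2))⟩, ⟨a, (hU a.2).2 .rfl⟩, ?_⟩
  intro u hu v hv huv
  have huv' : (G.induce (S : Set V)).Adj ⟨u, hUS hu⟩ ⟨v, hv⟩ := huv
  exact (hU hv).2 (((hU (hUS hu)).1 hu).trans huv'.reachable)

variable [Fintype V] [DecidableEq V] [DecidableRel G.Adj]

variable (G) in
/-- The set of edges with at least one end in `S`. -/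
def incidentEdges (S : Finset V) : Finset (Sym2 V) :=
  S.biUnion (G.incidenceFinset ·)

theorem mem_incidentEdges {S : Finset V} {e : Sym2 V} :
    e ∈ incidentEdges G S ↔ e ∈ G.edgeSet ∧ ∃ v ∈ S, v ∈ e := by
  simp only [incidentEdges, Finset.mem_biUnion, mem_incidenceFinset, incidenceSet, Set.mem_sep_iff]
  tauto

theorem incidentEdges_subset_edgeFinset (S : Finset V) : incidentEdges G S ⊆ G.edgeFinset :=
  fun _ he => mem_edgeFinset.2 (mem_incidentEdges.1 he).1

theorem edge_mem_incidentEdges {S : Finset V} {d : G.Dart} :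
    d.edge ∈ incidentEdges G S ↔ d.fst ∈ S ∨ d.snd ∈ S := by
  rw [mem_incidentEdges, and_iff_right d.edge_mem, Dart.edge]
  grind

theorem card_darts_incident (S : Finset V) :
    #{d : G.Dart | d.fst ∈ S ∨ d.snd ∈ S} = #(incidentEdges G S) * 2 := by
  simp only [← edge_mem_incidentEdges]
  exact card_filter_mem_eq_mul fun e he =>
    G.dart_edge_fiber_card e (mem_incidentEdges.1 he).1

theorem card_incidentEdges_add_card_incidentEdges {S U : Finset V} (hUS : U ⊆ S)
    (hU : ∀ u ∈ U, ∀ v ∈ S, G.Adj u v → v ∈ U) :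
    #(incidentEdges G U) + #(incidentEdges G (S \ U)) = #(incidentEdges G S) := by
  have hdisj : Disjoint (incidentEdges G U) (incidentEdges G (S \ U)) := by
    rw [Finset.disjoint_left]
    intro e he
    obtain ⟨d, rfl⟩ := exists_dart_edge_eq (mem_incidentEdges.1 he).1
    simp only [edge_mem_incidentEdges, Finset.mem_sdiff] at he ⊢
    have := hU d.fst
    have := hU d.snd
    grind [d.adj, d.adj.symm]
  rw [← Finset.card_union_of_disjoint hdisj, incidentEdges, incidentEdges,
    ← Finset.union_biUnion, Finset.union_sdiff_of_subset hUS, incidentEdges]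

theorem exists_injective_mem_incidenceFinset {T : Finset V} {k : ℕ}
    (hall : ∀ S ⊆ T, k * #S ≤ #(incidentEdges G S)) :
    ∃ f : T × Fin k → Sym2 V, f.Injective ∧ ∀ p, f p ∈ G.incidenceFinset p.1 := by
  rw [← Finset.all_card_le_biUnion_card_iff_exists_injective fun p : T × Fin k =>
    G.incidenceFinset p.1]
  intro A
  let S : Finset V := A.image fun p => p.1.1
  have hST : S ⊆ T := Finset.image_subset_iff.2 fun p _ => p.1.2
  have hAS : #A ≤ #(S ×ˢ (Finset.univ : Finset (Fin k))) := by
    refine Finset.card_le_card_of_injOn (fun p => (p.1.1, p.2)) (fun p hp => ?_) ?_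
    · simpa [S] using ⟨p.2, hp⟩
    · rintro ⟨⟨u, hu⟩, i⟩ - ⟨⟨v, hv⟩, j⟩ -
      simp
  calc #A ≤ k * #S := by simpa [mul_comm] using hAS
    _ ≤ #(incidentEdges G S) := hall S hST
    _ = #(A.biUnion fun p => G.incidenceFinset p.1) := by
      rw [incidentEdges, Finset.image_biUnion]

theorem ncard_darts_of_injective_mem_incidenceFinset {T : Finset V} {k : ℕ}
    {f : T × Fin k → Sym2 V} (hf : f.Injective) (hfG : ∀ p, f p ∈ G.incidenceFinset p.1)
    (v : T) : {d : G.Dart | d.fst = v ∧ ∃ i, f (v, i) = d.edge}.ncard = k := by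
  have hinj : {d : G.Dart | d.fst = v ∧ ∃ i, f (v, i) = d.edge}.InjOn Dart.edge := by
    rintro d ⟨hd, -⟩ e ⟨he, -⟩ hde
    refine ((dart_edge_eq_iff d e).1 hde).resolve_right fun h => e.fst_ne_snd ?_
    rw [he, ← hd, h]
    rfl
  have himage : Dart.edge '' {d : G.Dart | d.fst = v ∧ ∃ i, f (v, i) = d.edge} =
      Set.range (f ∘ Prod.mk v) := by
    ext e
    constructor
    · rintro ⟨d, ⟨-, hd⟩, rfl⟩
      exact hd
    · rintro ⟨i, rfl⟩
      obtain ⟨he, hv⟩ := (mem_incidenceFinset ..).1 (hfG (v, i))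
      obtain ⟨u, hu⟩ := Sym2.mem_iff_exists.1 hv
      exact ⟨⟨(v, u), by rwa [hu] at he⟩, ⟨rfl, i, hu⟩, hu.symm⟩
  rw [← hinj.ncard_image, himage, ← Set.image_univ,
    Set.ncard_image_of_injective _ (hf.comp (Prod.mk_right_injective v)), Set.ncard_univ,
    Nat.card_fin]

theorem exists_orientation_of_card_eq {T : Finset V} {k : ℕ}
    (hall : ∀ S ⊆ T, k * #S ≤ #(incidentEdges G S)) (hT : #(incidentEdges G T) = k * #T) :
    ∃ out : G.Dart → Prop, (∀ d, out d → d.fst ∈ T) ∧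
      (∀ d, d.fst ∈ T ∨ d.snd ∈ T → (out d ↔ ¬out d.symm)) ∧
      ∀ v ∈ T, {d : G.Dart | d.fst = v ∧ out d}.ncard = k := by
  obtain ⟨f, hf, hfG⟩ := exists_injective_mem_incidenceFinset hall
  have himage : Finset.univ.image f = incidentEdges G T := by
    refine Finset.eq_of_subset_of_card_le (Finset.image_subset_iff.2 fun p _ =>
      Finset.mem_biUnion.2 ⟨p.1, p.1.2, hfG p⟩) ?_
    rw [hT, Finset.card_image_of_injective _ hf]
    simp [mul_comm]
  let out (d : G.Dart) : Prop := ∃ p, p.1.1 = d.fst ∧ f p = d.edge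
  refine ⟨out, fun d ⟨p, hp, _⟩ => hp ▸ p.1.2, fun d hd => ⟨?_, fun hsymm => ?_⟩, fun v hv => ?_⟩
  · rintro ⟨p, hp, hpd⟩ ⟨q, hq, hqd⟩
    obtain rfl : p = q := hf (by rw [hpd, hqd, d.edge_symm])
    exact d.fst_ne_snd (hp.symm.trans hq)
  · obtain ⟨p, -, hpd⟩ := Finset.mem_image.1 (himage ▸ edge_mem_incidentEdges.2 hd)
    have hp : p.1.1 ∈ d.edge := hpd ▸ ((mem_incidenceFinset ..).1 (hfG p)).2
    exact (Sym2.mem_iff.1 hp).elim (fun h => ⟨p, h, hpd⟩)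
      fun h => (hsymm ⟨p, h, hpd.trans d.edge_symm.symm⟩).elim
  · rw [← ncard_darts_of_injective_mem_incidenceFinset hf hfG ⟨v, hv⟩]
    congr 1
    ext d
    refine and_congr_right fun hd => ⟨?_, fun ⟨i, hi⟩ => ⟨(⟨v, hv⟩, i), hd.symm, hi⟩⟩
    rintro ⟨⟨u, i⟩, hu, hi⟩
    obtain rfl : u = ⟨v, hv⟩ := Subtype.ext (hu.trans hd)
    exact ⟨i, hi⟩

end Graph

namespace RotationSystem

variable {V : Type*} [Fintype V] [DecidableEq V] {G : SimpleGraph V} [DecidableRel G.Adj]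
  (R : RotationSystem G)

theorem facePerm_apply (d : G.Dart) : R.facePerm d = R.σ d.symm :=
  rfl

theorem fst_facePerm (d : G.Dart) : (R.facePerm d).fst = d.snd :=
  R.fst_fixed d.symm

theorem facePerm_ne_self (d : G.Dart) : R.facePerm d ≠ d :=
  fun h => d.snd_ne_fst (by rw [← R.fst_facePerm, h])

theorem adj_snd_snd_facePerm (d : G.Dart) : G.Adj d.snd (R.facePerm d).snd :=
  R.fst_facePerm d ▸ (R.facePerm d).adj

theorem rotation_induction {p : G.Dart → Prop} {a b : G.Dart} (hab : a.fst = b.fst)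
    (ha : p a) (hp : ∀ c : G.Dart, c.fst = a.fst → p c → p (R.σ c)) : p b :=
  (sameCycle_induction (p := fun c => c.fst = a.fst ∧ p c) (R.orbit_eq a b hab)
    (fun c hc => ⟨(R.fst_fixed c).trans hc.1, hp c hc.1 hc.2⟩) ⟨rfl, ha⟩).2

/-- The faces of a rotation system, as the orbits of its face permutation. -/
def Face : Type _ :=
  Quotient (Equiv.Perm.SameCycle.setoid R.facePerm)

noncomputable instance : DecidableEq R.Face :=
  Classical.decEq _

noncomputable instance : Fintype R.Face :=
  haveI : Finite R.Face := Quotient.finite _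
  Fintype.ofFinite _

/-- The face whose boundary traverses the dart `d`. -/
def face (d : G.Dart) : R.Face :=
  Quotient.mk _ d

theorem face_surjective : Function.Surjective R.face :=
  Quotient.mk_surjective

variable {R} in
theorem face_eq_face_iff {d e : G.Dart} : R.face d = R.face e ↔ R.facePerm.SameCycle d e :=
  Quotient.eq

theorem face_facePerm (d : G.Dart) : R.face (R.facePerm d) = R.face d :=
  face_eq_face_iff.2 (Equiv.Perm.sameCycle_apply_left.2 .rfl)

/-- The set of faces with a corner at a vertex of `S`. -/
noncomputable def facesAt (S : Finset V) : Finset R.Face :=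
  ({d : G.Dart | d.fst ∈ S} : Finset G.Dart).image R.face

variable {R} in
theorem mem_facesAt {S : Finset V} {f : R.Face} :
    f ∈ R.facesAt S ↔ ∃ d : G.Dart, d.fst ∈ S ∧ R.face d = f := by
  simp [facesAt]

/-- The set of vertices on the boundary of a face. -/
noncomputable def faceVertices (f : R.Face) : Finset V :=
  ({d : G.Dart | R.face d = f} : Finset G.Dart).image (·.fst)

/-- The set of edges on the boundary of a face. -/
noncomputable def faceEdges (f : R.Face) : Finset (Sym2 V) :=
  ({d : G.Dart | R.face d = f} : Finset G.Dart).image Dart.edge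

variable {R} in
theorem mem_faceVertices {f : R.Face} {v : V} :
    v ∈ R.faceVertices f ↔ ∃ d : G.Dart, R.face d = f ∧ d.fst = v := by
  simp [faceVertices]

variable {R} in
theorem mem_faceEdges {f : R.Face} {e : Sym2 V} :
    e ∈ R.faceEdges f ↔ ∃ d : G.Dart, R.face d = f ∧ d.edge = e := by
  simp [faceEdges]

theorem fst_mem_faceVertices (d : G.Dart) : d.fst ∈ R.faceVertices (R.face d) :=
  mem_faceVertices.2 ⟨d, rfl, rfl⟩

theorem snd_mem_faceVertices (d : G.Dart) : d.snd ∈ R.faceVertices (R.face d) :=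
  mem_faceVertices.2 ⟨R.facePerm d, R.face_facePerm d, R.fst_facePerm d⟩

section CauchyRiemann

/-- The defect, on each dart, of the discrete Cauchy–Riemann equations for a function `g` on the
vertices and a function `h` on the faces: it vanishes when the increment of `g` along the dart
equals the increment of `h` across it. -/
def cauchyRiemann (K : Type*) [CommRing K] : (V → K) × (R.Face → K) →ₗ[K] (G.Dart → K) where
  toFun p d := p.1 d.snd - p.1 d.fst - (p.2 (R.face d.symm) - p.2 (R.face d))
  map_add' p q := by ext d; simp only [Prod.fst_add, Prod.snd_add, Pi.add_apply]; ring
  map_smul' c p := by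
    ext d; simp only [Prod.smul_fst, Prod.smul_snd, Pi.smul_apply, smul_eq_mul, RingHom.id_apply]
    ring

theorem cauchyRiemann_apply {K : Type*} [CommRing K] (g : V → K) (h : R.Face → K) (d : G.Dart) :
    R.cauchyRiemann K (g, h) d = g d.snd - g d.fst - (h (R.face d.symm) - h (R.face d)) :=
  rfl

theorem cauchyRiemann_symm {K : Type*} [CommRing K] (p : (V → K) × (R.Face → K)) (d : G.Dart) :
    R.cauchyRiemann K p d.symm = -R.cauchyRiemann K p d := by
  simp only [cauchyRiemann, LinearMap.coe_mk, AddHom.coe_mk, Dart.symm, Prod.fst_swap,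
    Prod.snd_swap, Prod.swap_swap]
  ring

theorem sum_increment_mul_face_eq_zero {K : Type*} [CommRing K] (g : V → K) (h : R.Face → K) :
    ∑ d : G.Dart, (g d.snd - g d.fst) * h (R.face d) = 0 := by
  have hsum : ∑ d : G.Dart, g d.snd * h (R.face d) = ∑ d : G.Dart, g d.fst * h (R.face d) := by
    rw [← Equiv.sum_comp R.facePerm fun d => g d.fst * h (R.face d)]
    simp only [fst_facePerm, face_facePerm]
  simp only [sub_mul, Finset.sum_sub_distrib, hsum, sub_self]

theorem sum_increment_mul_face_symm_eq_zero {K : Type*} [CommRing K] (g : V → K)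
    (h : R.Face → K) : ∑ d : G.Dart, (g d.snd - g d.fst) * h (R.face d.symm) = 0 := by
  rw [← neg_eq_zero, ← R.sum_increment_mul_face_eq_zero g h, ← Finset.sum_neg_distrib,
    ← Equiv.sum_comp (dartRev G) fun d => (g d.snd - g d.fst) * h (R.face d)]
  refine Finset.sum_congr rfl fun d _ => ?_
  change _ = (g d.fst - g d.snd) * h (R.face d.symm)
  ring

theorem eq_zero_of_cauchyRiemann_eq_zero {K : Type*} [CommRing K] [LinearOrder K]
    [IsStrictOrderedRing K] (hG : G.Preconnected) {S : Set V} {x : V} (hx : x ∉ S) {g : V → K}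
    {h : R.Face → K} (hg : ∀ v ∉ S, g v = 0)
    (hCR : ∀ d : G.Dart, d.fst ∈ S → R.cauchyRiemann K (g, h) d = 0) : g = 0 := by
  have hterm (d : G.Dart) : (g d.snd - g d.fst) * (g d.snd - g d.fst) =
      (g d.snd - g d.fst) * h (R.face d.symm) - (g d.snd - g d.fst) * h (R.face d) := by
    suffices (g d.snd - g d.fst) * R.cauchyRiemann K (g, h) d = 0 by
      rw [cauchyRiemann_apply] at this
      linear_combination this
    by_cases hfst : d.fst ∈ S
    · rw [hCR d hfst, mul_zero]
    by_cases hsnd : d.snd ∈ S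
    · rw [neg_eq_zero.1 ((R.cauchyRiemann_symm _ d).symm.trans (hCR d.symm hsnd)), mul_zero]
    · rw [hg _ hfst, hg _ hsnd, sub_self, zero_mul]
  have henergy : ∑ d : G.Dart, (g d.snd - g d.fst) * (g d.snd - g d.fst) = 0 := by
    simp only [hterm, Finset.sum_sub_distrib, sum_increment_mul_face_eq_zero,
      sum_increment_mul_face_symm_eq_zero, sub_self]
  have hincrement (d : G.Dart) : g d.snd - g d.fst = 0 :=
    mul_self_eq_zero.1 <| (Finset.sum_eq_zero_iff_of_nonneg fun _ _ => mul_self_nonneg _).1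
      henergy d (Finset.mem_univ d)
  ext v
  refine reachable_induction (p := fun v => g v = 0) (hG x v) (fun a b hab ha => ?_) (hg x hx)
  exact (sub_eq_zero.1 (hincrement ⟨(a, b), hab⟩)).trans ha

theorem apply_face_eq_of_preconnected_induce {α : Type*} {S : Set V} {h : R.Face → α}
    (hS : (G.induce S).Preconnected)
    (hh : ∀ d : G.Dart, d.fst ∈ S → h (R.face d.symm) = h (R.face d)) {d e : G.Dart}
    (hd : d.fst ∈ S) (he : e.fst ∈ S) : h (R.face e) = h (R.face d) := by
  have hrot {a b : G.Dart} (ha : a.fst ∈ S) (hab : a.fst = b.fst) :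
      h (R.face b) = h (R.face a) :=
    R.rotation_induction (p := fun c => h (R.face c) = h (R.face a)) hab rfl fun c hc hca => by
      rw [← c.symm_symm, ← facePerm_apply, face_facePerm, hh c (hc ▸ ha), hca]
  refine reachable_induction (hS ⟨d.fst, hd⟩ ⟨e.fst, he⟩)
    (p := fun v : S => ∀ c : G.Dart, c.fst = v → h (R.face c) = h (R.face d)) ?_
    (fun c hc => hrot hd hc.symm) e rfl
  rintro ⟨u, hu⟩ ⟨v, hv⟩ huv hconst c rfl
  let uv : G.Dart := ⟨(u, c.fst), huv⟩
  exact (hrot (a := uv.symm) (b := c) hv rfl).trans ((hh uv hu).trans (hconst uv rfl))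

theorem eq_zero_and_eq_zero_of_cauchyRiemann_eq_zero {K : Type*} [CommRing K]
    [LinearOrder K] [IsStrictOrderedRing K] (hG : G.Preconnected) {S : Finset V} {x : V}
    (hx : x ∉ S) (hS : (G.induce (S : Set V)).Preconnected) {g : V → K} {h : R.Face → K}
    {d₁ : G.Dart} (hg : ∀ v ∉ S, g v = 0) (hh : ∀ f ∉ R.facesAt S, h f = 0) (hfst : d₁.fst ∈ S)
    (hd₁ : h (R.face d₁) = 0) (hCR : ∀ d : G.Dart, d.fst ∈ S → R.cauchyRiemann K (g, h) d = 0) :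
    g = 0 ∧ h = 0 := by
  have hg0 : g = 0 := R.eq_zero_of_cauchyRiemann_eq_zero hG (S := S) hx hg hCR
  refine ⟨hg0, funext fun f => ?_⟩
  by_cases hf : f ∈ R.facesAt S
  · obtain ⟨d, hd, rfl⟩ := mem_facesAt.1 hf
    rw [R.apply_face_eq_of_preconnected_induce hS (h := h) (fun c hc => Eq.symm ?_) hfst hd, hd₁,
      Pi.zero_apply]
    simpa [cauchyRiemann_apply, hg0, sub_eq_zero] using hCR c hc
  · exact hh f hf

theorem card_add_card_facesAt_le (hG : G.Preconnected) {S : Finset V} {x : V} (hx : x ∉ S)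
    (hS : (G.induce (S : Set V)).Connected) :
    #S + #(R.facesAt S) ≤ #(incidentEdges G S) + 1 := by
  obtain ⟨s, hs⟩ := hS.nonempty
  have : Nontrivial V := ⟨s, x, ne_of_mem_of_not_mem hs hx⟩
  obtain ⟨t, hst⟩ := hG.exists_adj_of_nontrivial s
  let d₁ : G.Dart := ⟨(s, t), hst⟩
  have hd₁ : R.face d₁ ∈ R.facesAt S := mem_facesAt.2 ⟨d₁, hs, rfl⟩
  let F := (R.facesAt S).erase (R.face d₁)
  choose rep hrep using fun e : incidentEdges G S =>
    exists_dart_edge_eq (mem_incidentEdges.1 e.2).1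
  let L : (V → ℚ) × (R.Face → ℚ) →ₗ[ℚ]
      (incidentEdges G S → ℚ) × ((Sᶜ : Finset V) → ℚ) × ((Fᶜ : Finset R.Face) → ℚ) :=
    (LinearMap.funLeft ℚ ℚ rep ∘ₗ R.cauchyRiemann ℚ).prod
      ((LinearMap.funLeft ℚ ℚ Subtype.val).prodMap (LinearMap.funLeft ℚ ℚ Subtype.val))
  have hL : Function.Injective L := by
    rw [injective_iff_map_eq_zero]
    rintro ⟨g, h⟩ hgh
    have hedge (e) : R.cauchyRiemann ℚ (g, h) (rep e) = 0 := congrFun congr(($hgh).1) e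
    have hg (v) (hv : v ∉ S) : g v = 0 := congrFun congr(($hgh).2.1) ⟨v, Finset.mem_compl.2 hv⟩
    have hh (f) (hf : f ∉ F) : h f = 0 := congrFun congr(($hgh).2.2) ⟨f, Finset.mem_compl.2 hf⟩
    have hCR (d : G.Dart) (hd : d.fst ∈ S) : R.cauchyRiemann ℚ (g, h) d = 0 := by
      have he := hedge ⟨d.edge, edge_mem_incidentEdges.2 (.inl hd)⟩
      rcases (dart_edge_eq_iff _ _).1 (hrep ⟨d.edge, _⟩) with hde | hde
      · rwa [hde] at he
      · rwa [hde, cauchyRiemann_symm, neg_eq_zero] at he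
    exact Prod.mk_eq_zero.2 <| R.eq_zero_and_eq_zero_of_cauchyRiemann_eq_zero hG hx
      hS.preconnected hg (fun f hf => hh f fun hF => hf (Finset.mem_of_mem_erase hF)) hs
      (hh _ (Finset.notMem_erase _ _)) hCR
  have hcard := LinearMap.finrank_le_finrank_of_injective hL
  simp only [Module.finrank_prod, Module.finrank_fintype_fun_eq_card, Fintype.card_coe] at hcard
  have hF : #F + 1 = #(R.facesAt S) := Finset.card_erase_add_one hd₁
  have := S.card_add_card_compl
  have := F.card_add_card_compl
  lia

end CauchyRiemann

section Triangulation

/-- A triangulation: the boundary of every face is traversed in three steps. As `G` has no loops,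
the alternative that a face is traversed in one step does not arise. -/
def IsTriangulation : Prop :=
  ∀ d : G.Dart, R.facePerm (R.facePerm (R.facePerm d)) = d

/-- The link of a set `S` of vertices of a triangulation, that is, the darts opposite to the
vertices of `S`: their ends lie outside `S`, but the third vertex of their face lies in `S`. -/
def link (S : Finset V) : Finset G.Dart :=
  {d | d.fst ∉ S ∧ d.snd ∉ S ∧ (R.facePerm d).snd ∈ S}

variable {R}

theorem mem_link {S : Finset V} {d : G.Dart} :
    d ∈ R.link S ↔ d.fst ∉ S ∧ d.snd ∉ S ∧ (R.facePerm d).snd ∈ S := by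
  simp [link]

theorem symm_mem_link {S : Finset V} {c : G.Dart} (hfst : c.fst ∉ S) (hsnd : c.snd ∉ S)
    (hσ : (R.σ c).snd ∈ S) : c.symm ∈ R.link S :=
  mem_link.2 ⟨hsnd, hfst, hσ⟩

namespace IsTriangulation

theorem facePerm_pow_three (hR : R.IsTriangulation) : R.facePerm ^ 3 = 1 :=
  Equiv.ext hR

theorem face_eq_face_iff (hR : R.IsTriangulation) {d e : G.Dart} :
    R.face d = R.face e ↔ e = d ∨ e = R.facePerm d ∨ e = R.facePerm (R.facePerm d) :=
  RotationSystem.face_eq_face_iff.trans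
    (sameCycle_iff_of_pow_three_eq_one hR.facePerm_pow_three)

theorem snd_facePerm_facePerm (hR : R.IsTriangulation) (d : G.Dart) :
    (R.facePerm (R.facePerm d)).snd = d.fst := by
  rw [← fst_facePerm, hR]

theorem adj_fst_snd_facePerm (hR : R.IsTriangulation) (d : G.Dart) :
    G.Adj d.fst (R.facePerm d).snd := by
  have hadj := (R.facePerm (R.facePerm d)).adj.symm
  rwa [hR.snd_facePerm_facePerm, fst_facePerm] at hadj

theorem exists_common_neighbor (hR : R.IsTriangulation) {a b : V} (hab : G.Adj a b) :
    ∃ c, G.Adj a c ∧ G.Adj b c :=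
  let d : G.Dart := ⟨(a, b), hab⟩
  ⟨_, hR.adj_fst_snd_facePerm d, R.adj_snd_snd_facePerm d⟩

theorem snd_facePerm_σ (hR : R.IsTriangulation) (d : G.Dart) :
    (R.facePerm (R.σ d)).snd = d.snd :=
  hR.snd_facePerm_facePerm d.symm

theorem card_filter_face_eq (hR : R.IsTriangulation) (f : R.Face) :
    #{d : G.Dart | R.face d = f} = 3 := by
  obtain ⟨d, rfl⟩ := R.face_surjective f
  refine Finset.card_eq_three.2 ⟨d, R.facePerm d, R.facePerm (R.facePerm d),
    (R.facePerm_ne_self d).symm, fun h => ?_, (R.facePerm_ne_self _).symm, ?_⟩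
  · exact R.facePerm_ne_self d ((congrArg R.facePerm h).trans (hR d))
  · ext e
    simpa [eq_comm] using hR.face_eq_face_iff (d := d) (e := e)

theorem face_mem_facesAt (hR : R.IsTriangulation) {S : Finset V} {d : G.Dart} :
    R.face d ∈ R.facesAt S ↔ d.fst ∈ S ∨ d.snd ∈ S ∨ (R.facePerm d).snd ∈ S := by
  rw [← R.fst_facePerm d, ← R.fst_facePerm (R.facePerm d)]
  simp only [mem_facesAt, eq_comm (b := R.face d), hR.face_eq_face_iff]
  grind

theorem card_facesAt_mul_three (hR : R.IsTriangulation) (S : Finset V) :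
    #(R.facesAt S) * 3 = #(incidentEdges G S) * 2 + #(R.link S) := by
  have hdisj : Disjoint ({d | d.fst ∈ S ∨ d.snd ∈ S} : Finset G.Dart) (R.link S) := by
    rw [Finset.disjoint_left]
    intro d hd
    simp only [Finset.mem_filter, Finset.mem_univ, true_and] at hd
    rw [mem_link]
    tauto
  rw [← card_filter_mem_eq_mul fun f _ => hR.card_filter_face_eq f, ← card_darts_incident,
    ← Finset.card_union_of_disjoint hdisj]
  congr 1
  ext d
  simp only [hR.face_mem_facesAt, Finset.mem_filter, Finset.mem_univ, true_and, Finset.mem_union,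
    mem_link]
  tauto

theorem σ_mem_link (hR : R.IsTriangulation) {S : Finset V} {c : G.Dart} (hfst : c.fst ∉ S)
    (hsnd : c.snd ∈ S) (hσ : (R.σ c).snd ∉ S) : R.σ c ∈ R.link S :=
  mem_link.2 ⟨(R.fst_fixed c).symm ▸ hfst, hσ, (hR.snd_facePerm_σ c).symm ▸ hsnd⟩

theorem exists_mem_link_fst_eq (hR : R.IsTriangulation) {S : Finset V} {u v w : V} (hu : u ∉ S)
    (hv : v ∈ S) (huv : G.Adj u v) (hw : w ∉ S) (huw : G.Adj u w) : ∃ d ∈ R.link S, d.fst = u := by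
  by_contra! hlink
  refine hw (R.rotation_induction (p := fun c => c.snd ∈ S) (a := ⟨(u, v), huv⟩)
    (b := ⟨(u, w), huw⟩) rfl hv fun c hc hcS => ?_)
  by_contra hσ
  exact hlink _ (hR.σ_mem_link (hc ▸ hu) hcS hσ) ((R.fst_fixed c).trans hc)

theorem exists_ne_symm_mem_link (hR : R.IsTriangulation) {S : Finset V} {v w : V} {d : G.Dart}
    (hd : d ∈ R.link S) (hv : v ∈ S) (hdv : G.Adj d.fst v) (hw : w ∉ S) (hdw : G.Adj d.fst w)
    (hne : w ≠ d.snd) : ∃ c : G.Dart, c.fst = d.fst ∧ c ≠ d ∧ c.symm ∈ R.link S := by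
  obtain ⟨hfst, -, hthird⟩ := mem_link.1 hd
  by_contra! hlink
  refine (R.rotation_induction (p := fun c => c.snd ∉ S ∧ c ≠ d) (a := ⟨(d.fst, w), hdw⟩)
    (b := ⟨(d.fst, v), hdv⟩) rfl ⟨hw, ?_⟩ fun c hc ⟨hcS, hcd⟩ => ⟨fun hσ => ?_, ?_⟩).1 hv
  · exact fun h => hne congr(($h).snd)
  · exact hlink c hc hcd (symm_mem_link (hc ▸ hfst) hcS hσ)
  · rintro rfl
    exact hcS (hR.snd_facePerm_σ c ▸ hthird)

-- The link of `S` enters and leaves `u`, and a third dart of it continues the one leaving `u`.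
theorem three_le_card_link_of_adj (hR : R.IsTriangulation) {S : Finset V} {u v : V} (hu : u ∉ S)
    (hv : v ∈ S) (huv : G.Adj u v) (huS : (G.neighborSet u \ S).Nontrivial) :
    3 ≤ #(R.link S) := by
  obtain ⟨w₁, ⟨huw₁, hw₁⟩⟩ := huS.nonempty
  obtain ⟨d, hd, rfl⟩ := hR.exists_mem_link_fst_eq hu hv huv hw₁ huw₁
  obtain ⟨w₂, ⟨hdw₂, hw₂⟩, hne⟩ := huS.exists_ne d.snd
  obtain ⟨c, hc, hcd, hclink⟩ := hR.exists_ne_symm_mem_link hd hv huv hw₂ hdw₂ hne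
  obtain ⟨-, hsnd, hthird⟩ := mem_link.1 hd
  obtain ⟨e, he, hed⟩ := hR.exists_mem_link_fst_eq hsnd hthird
    (R.adj_snd_snd_facePerm d) hu d.adj.symm
  have hsnd_ne : c.snd ≠ d.snd := fun h => hcd (Dart.ext _ _ (Prod.ext hc h))
  refine Finset.two_lt_card.2 ⟨d, hd, c.symm, hclink, e, he, ?_, ?_, ?_⟩
  · exact fun h => c.fst_ne_snd (hc.trans congr(($h).fst))
  · exact fun h => d.fst_ne_snd (congr(($h).fst).trans hed)
  · exact fun h => hsnd_ne (congr(($h).fst).trans hed)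

theorem three_le_card_link (hR : R.IsTriangulation) (hG : G.Preconnected) {S : Finset V}
    (hS : S.Nonempty) {x : V} (hx : x ∉ S) (hxS : (G.neighborSet x \ S).Nontrivial) :
    3 ≤ #(R.link S) := by
  obtain ⟨s, hs⟩ := hS
  by_contra hlink
  refine (reachable_induction (p := fun v => v ∉ S ∧ (G.neighborSet v \ S).Nontrivial) (hG x s)
    (fun a b hab ⟨ha, haS⟩ => ?_) ⟨hx, hxS⟩).1 hs
  have hnbr {b : V} (hab : G.Adj a b) : b ∉ S :=
    fun hb => hlink (hR.three_le_card_link_of_adj ha hb hab haS)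
  obtain ⟨c, hac, hbc⟩ := hR.exists_common_neighbor hab
  exact ⟨hnbr hab, a, ⟨hab.symm, ha⟩, c, ⟨hbc, hnbr hac⟩, hac.ne⟩

theorem three_mul_card_le_card_incidentEdges (hR : R.IsTriangulation) (hG : G.Preconnected)
    {S : Finset V} {x : V} (hx : x ∉ S) (hxS : (G.neighborSet x \ S).Nontrivial) :
    3 * #S ≤ #(incidentEdges G S) := by
  induction S using Finset.strongInduction with | H S ih
  rcases S.eq_empty_or_nonempty with rfl | hS
  · simp
  by_cases hconn : (G.induce (S : Set V)).Preconnected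
  · have : Nonempty (S : Set V) := hS.to_subtype
    have hrank := R.card_add_card_facesAt_le hG hx ⟨hconn⟩
    have hcount := hR.card_facesAt_mul_three S
    have hlink := hR.three_le_card_link hG hS hx hxS
    lia
  · obtain ⟨U, hU, hUne, hclosed⟩ := exists_ssubset_of_not_preconnected_induce hconn
    have ih' {A : Finset V} (hA : A ⊂ S) : 3 * #A ≤ #(incidentEdges G A) :=
      ih A hA (fun h => hx (hA.1 h)) (hxS.mono (Set.sdiff_subset_sdiff_right hA.1))
    have hUcard := ih' hU
    have hScard := ih' (Finset.sdiff_ssubset hU.1 hUne)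
    have hadd := card_incidentEdges_add_card_incidentEdges hU.1 hclosed
    have := Finset.card_sdiff_add_card_eq_card hU.1
    lia

theorem injOn_fst_face (hR : R.IsTriangulation) (f : R.Face) :
    {d : G.Dart | R.face d = f}.InjOn (·.fst) := by
  rintro d rfl e hed hfst
  have hfst_ne (c : G.Dart) : (R.facePerm c).fst ≠ c.fst := R.fst_facePerm c ▸ c.snd_ne_fst
  rcases hR.face_eq_face_iff.1 hed.symm with rfl | rfl | rfl
  · rfl
  · exact (hfst_ne d hfst.symm).elim
  · exact (hfst_ne _ ((congrArg (·.fst) (hR d)).trans hfst)).elim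

theorem face_symm_ne (hR : R.IsTriangulation) (d : G.Dart) : R.face d.symm ≠ R.face d := by
  intro h
  have hsymm : d.symm = R.facePerm d :=
    hR.injOn_fst_face _ h (R.face_facePerm d) (R.fst_facePerm d).symm
  exact (hR.adj_fst_snd_facePerm d).ne congr(($hsymm).snd)

theorem injOn_edge_face (hR : R.IsTriangulation) (f : R.Face) :
    {d : G.Dart | R.face d = f}.InjOn Dart.edge := by
  rintro d hd e rfl hde
  refine ((dart_edge_eq_iff d e).1 hde).resolve_right ?_
  rintro rfl
  exact hR.face_symm_ne e hd

theorem card_faceVertices (hR : R.IsTriangulation) (f : R.Face) : #(R.faceVertices f) = 3 := by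
  rw [faceVertices, Finset.card_image_of_injOn (by simpa using hR.injOn_fst_face f),
    hR.card_filter_face_eq]

theorem card_faceEdges (hR : R.IsTriangulation) (f : R.Face) : #(R.faceEdges f) = 3 := by
  rw [faceEdges, Finset.card_image_of_injOn (by simpa using hR.injOn_edge_face f),
    hR.card_filter_face_eq]

theorem card_edgeFinset_add_six (hR : R.IsTriangulation) (hplanar : R.IsPlanar) :
    #G.edgeFinset + 6 = 3 * Fintype.card V := by
  have hfaces := numCycles_mul_of_pow_prime_eq_one hR.facePerm_pow_three R.facePerm_ne_self
  rw [G.dart_card_eq_twice_card_edges] at hfaces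
  rw [IsPlanar] at hplanar
  lia

theorem three_mul_card_le_card_incidentEdges_of_disjoint (hR : R.IsTriangulation)
    (hG : G.Preconnected) {S : Finset V} {f : R.Face} (hS : Disjoint S (R.faceVertices f)) :
    3 * #S ≤ #(incidentEdges G S) := by
  obtain ⟨d, rfl⟩ := R.face_surjective f
  have hout {v : V} (hv : v ∈ R.faceVertices (R.face d)) : v ∉ S := Finset.disjoint_right.1 hS hv
  have hthird : (R.facePerm d).snd ∈ R.faceVertices (R.face d) :=
    R.face_facePerm d ▸ R.snd_mem_faceVertices (R.facePerm d)
  exact hR.three_mul_card_le_card_incidentEdges hG (hout (R.fst_mem_faceVertices d))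
    ⟨d.snd, ⟨d.adj, hout (R.snd_mem_faceVertices d)⟩, (R.facePerm d).snd,
      ⟨hR.adj_fst_snd_facePerm d, hout hthird⟩, (R.adj_snd_snd_facePerm d).ne⟩

theorem card_edgeFinset_sdiff_faceEdges (hR : R.IsTriangulation) (hplanar : R.IsPlanar)
    (f : R.Face) : #(G.edgeFinset \ R.faceEdges f) = 3 * #(R.faceVertices f)ᶜ := by
  have hfaceEdges : R.faceEdges f ⊆ G.edgeFinset := fun e he => by
    obtain ⟨d, -, rfl⟩ := mem_faceEdges.1 he
    exact mem_edgeFinset.2 d.edge_mem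
  have hcard := Finset.card_sdiff_add_card_eq_card hfaceEdges
  have hcompl := (R.faceVertices f).card_compl_add_card
  rw [hR.card_faceEdges] at hcard
  rw [hR.card_faceVertices] at hcompl
  have hedges := hR.card_edgeFinset_add_six hplanar
  lia

theorem incidentEdges_compl_faceVertices (hR : R.IsTriangulation) (hG : G.Preconnected)
    (hplanar : R.IsPlanar) (f : R.Face) :
    incidentEdges G (R.faceVertices f)ᶜ = G.edgeFinset \ R.faceEdges f := by
  refine Finset.eq_of_subset_of_card_le ?_ ?_
  · refine Finset.subset_sdiff.2 ⟨incidentEdges_subset_edgeFinset _, Finset.disjoint_right.2 ?_⟩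
    intro e he
    obtain ⟨d, rfl, rfl⟩ := mem_faceEdges.1 he
    simp [edge_mem_incidentEdges, R.fst_mem_faceVertices, R.snd_mem_faceVertices]
  · rw [hR.card_edgeFinset_sdiff_faceEdges hplanar]
    exact hR.three_mul_card_le_card_incidentEdges_of_disjoint hG disjoint_compl_left

theorem exists_orientation (hR : R.IsTriangulation) (hG : G.Preconnected)
    (hplanar : R.IsPlanar) (f : R.Face) :
    ∃ ori : G.Dart → Prop, (∀ d, ori d ↔ ¬ori d.symm) ∧
      (∀ d, ori d → d.fst ∈ R.faceVertices f → R.face d = f) ∧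
      ∀ v ∉ R.faceVertices f, {d : G.Dart | d.fst = v ∧ ori d}.ncard = 3 := by
  have hedges := hR.incidentEdges_compl_faceVertices hG hplanar f
  obtain ⟨out, hfst, hsymm, hncard⟩ := exists_orientation_of_card_eq
    (fun S hS => hR.three_mul_card_le_card_incidentEdges_of_disjoint hG
      (Finset.subset_compl_iff_disjoint_right.1 hS))
    (hedges ▸ hR.card_edgeFinset_sdiff_faceEdges hplanar f)
  have hout {d : G.Dart} (hd : d.fst ∈ R.faceVertices f) : ¬out d :=
    fun h => Finset.mem_compl.1 (hfst d h) hd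
  have hface {d : G.Dart} (hd : R.face d = f) :
      ¬out d ∧ ¬out d.symm ∧ R.face d.symm ≠ f := by
    subst hd
    exact ⟨hout (R.fst_mem_faceVertices d), hout (R.snd_mem_faceVertices d), hR.face_symm_ne d⟩
  have hinterior {d : G.Dart} (hd : R.face d ≠ f) (hd' : R.face d.symm ≠ f) :
      out d ↔ ¬out d.symm := by
    have hmem : d.edge ∈ G.edgeFinset \ R.faceEdges f := by
      simp only [Finset.mem_sdiff, mem_edgeFinset, d.edge_mem, true_and, mem_faceEdges,
        dart_edge_eq_iff]
      rintro ⟨e, he, rfl | rfl⟩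
      exacts [hd he, hd' (d.symm_symm ▸ he)]
    exact hsymm d (edge_mem_incidentEdges.1 (hedges ▸ hmem))
  refine ⟨fun d => R.face d = f ∨ out d, fun d => ?_, fun d hd hdf =>
    hd.resolve_right (hout hdf), fun v hv => ?_⟩
  · have := hface (d := d)
    have := hface (d := d.symm)
    have := hinterior (d := d)
    rw [d.symm_symm] at *
    tauto
  · rw [← hncard v (Finset.mem_compl.2 hv)]
    congr 1
    ext d
    exact and_congr_right fun hd =>
      or_iff_right fun h => hv (hd ▸ h ▸ R.fst_mem_faceVertices d)

end IsTriangulation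

end Triangulation

end RotationSystem

/-- Schnyder's theorem on 3-orientations. Let `G` be a planar triangulation on `n ≥ 3`
vertices, given by a planar rotation system `R` in which every face is a triangle, with
outer face the face of the dart `d₀`. Then `G` admits an orientation `ori` of its edges
in which every vertex has out-degree at most 3; in fact the internal edges can be
oriented so that each internal vertex has out-degree exactly 3 and the outer vertices
have out-degree 0 among internal edges. -/
theorem stmt_14 {V : Type*} [Fintype V] [DecidableEq V]
    (G : SimpleGraph V) [DecidableRel G.Adj]
    (hn : 3 ≤ Fintype.card V) (hconn : G.Connected)
    (R : RotationSystem G) (hplanar : R.IsPlanar)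
    (htri : ∀ d : G.Dart, R.facePerm (R.facePerm (R.facePerm d)) = d ∧ R.facePerm d ≠ d)
    (d₀ : G.Dart) :
    ∃ ori : G.Dart → Prop,
      (∀ d : G.Dart, ori d ↔ ¬ ori d.symm) ∧
      (∀ v : V, {d : G.Dart | d.toProd.1 = v ∧ ori d}.ncard ≤ 3) ∧
      (∀ v : V, (¬ ∃ d : G.Dart, R.facePerm.SameCycle d₀ d ∧ d.toProd.1 = v) →
        {d : G.Dart | d.toProd.1 = v ∧ ori d ∧
          ¬ R.facePerm.SameCycle d₀ d ∧ ¬ R.facePerm.SameCycle d₀ d.symm}.ncard = 3) ∧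
      (∀ v : V, (∃ d : G.Dart, R.facePerm.SameCycle d₀ d ∧ d.toProd.1 = v) →
        {d : G.Dart | d.toProd.1 = v ∧ ori d ∧
          ¬ R.facePerm.SameCycle d₀ d ∧ ¬ R.facePerm.SameCycle d₀ d.symm}.ncard = 0) := by
  have hR : R.IsTriangulation := fun d => (htri d).1
  simp only [← RotationSystem.face_eq_face_iff, eq_comm (a := R.face d₀),
    ← RotationSystem.mem_faceVertices]
  obtain ⟨ori, hsymm, hface, hinterior⟩ := hR.exists_orientation hconn.preconnected hplanar
    (R.face d₀)
  refine ⟨ori, hsymm, fun v => ?_, fun v hv => ?_, fun v hv => ?_⟩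
  · by_cases hv : v ∈ R.faceVertices (R.face d₀)
    · have hsub : {d : G.Dart | d.fst = v ∧ ori d}.Subsingleton :=
        fun d ⟨hdv, hd⟩ e ⟨hev, he⟩ => hR.injOn_fst_face (R.face d₀)
          (hface d hd (hdv ▸ hv)) (hface e he (hev ▸ hv)) (hdv.trans hev.symm)
      exact (Set.ncard_le_one_iff_subsingleton.2 hsub).trans (by norm_num)
    · exact (hinterior v hv).le
  · rw [← hinterior v hv]
    congr 1
    ext d
    refine and_congr_right fun hd => and_iff_left ⟨fun h => ?_, fun h => ?_⟩
    · exact hv (hd ▸ h ▸ R.fst_mem_faceVertices d)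
    · exact hv (hd ▸ h ▸ R.snd_mem_faceVertices d.symm)
  · rw [Set.ncard_eq_zero, Set.eq_empty_iff_forall_notMem]
    rintro d ⟨hd, hori, hne, -⟩
    exact hne (hface d hori (hd ▸ hv))
end
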